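/- Suppose ω∞(t), t ∈ (−∞, 0], is an ancient solution of the Kähler-Ricci flow ∂_t ω = −Ric(ω) on ℂ^{m+n} (standard complex structure) with identically vanishing scalar curvature and satisfying C⁻¹ ω_{ℂ^{m+n}} ≤ ω∞(t) ≤ C ω_{ℂ^{m+n}} for some C > 1 and all t ≤ 0. Then ω∞(t) is a constant-coefficient Kähler form, independent of both the space point and of t. -/

import Mathlib

noncomputable section

open Matrix

/-- Complex Euclidean space `ℂᴺ`. -/
abbrev Cn (N : ℕ) := EuclideanSpace ℂ (Fin N)

/-- The `j`-th standard coordinate direction in `ℂᴺ`. -/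
def coordDir (N : ℕ) (j : Fin N) : Cn N := EuclideanSpace.single j 1

/-- The Wirtinger derivative `∂f/∂z_j = (∂f/∂x_j - i ∂f/∂y_j)/2`. -/
def wdz {N : ℕ} (j : Fin N) (f : Cn N → ℂ) (x : Cn N) : ℂ :=
  (2 : ℂ)⁻¹ * (fderiv ℝ f x (coordDir N j) - Complex.I * fderiv ℝ f x (Complex.I • coordDir N j))

/-- The conjugate Wirtinger derivative `∂f/∂z̄_j = (∂f/∂x_j + i ∂f/∂y_j)/2`. -/
def wdzbar {N : ℕ} (j : Fin N) (f : Cn N → ℂ) (x : Cn N) : ℂ :=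
  (2 : ℂ)⁻¹ * (fderiv ℝ f x (coordDir N j) + Complex.I * fderiv ℝ f x (Complex.I • coordDir N j))

/-- The Ricci curvature `Ric_{i j̄} = -∂_{z_i} ∂_{z̄_j} log det g` of a Kähler metric on `ℂᴺ`
given by its matrix of coefficients `g_{i j̄}`. -/
def ricMat {N : ℕ} (g : Cn N → Matrix (Fin N) (Fin N) ℂ) (x : Cn N) :
    Matrix (Fin N) (Fin N) ℂ :=
  Matrix.of fun i j =>
    -(wdz i (fun y => wdzbar j (fun w => Complex.log ((g w).det)) y) x)

/-- `g` is (the coefficient matrix field of) a Kähler metric on `ℂᴺ` with its standard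
complex structure: smooth, Hermitian, and satisfying the Kähler symmetry
`∂_{z_k} g_{i j̄} = ∂_{z_i} g_{k j̄}`. -/
def IsKahlerMatrixField {N : ℕ} (g : Cn N → Matrix (Fin N) (Fin N) ℂ) : Prop :=
  (∀ i j : Fin N, ContDiff ℝ (⊤ : ℕ∞) (fun x => g x i j)) ∧ (∀ x, (g x).IsHermitian) ∧
    ∀ (x : Cn N) (i j k : Fin N), wdz k (fun y => g y i j) x = wdz i (fun y => g y k j) x

set_option linter.unusedSectionVars false

namespace Calabi

section alg

variable {A : Type*} [CommRing A] [StarRing A] {ι : Type*} [Fintype ι] [DecidableEq ι]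

lemma map_mul' (δ : Derivation ℤ A A) (M N : Matrix ι ι A) :
    (M * N).map δ = M.map δ * N + M * N.map δ := by
  ext i j
  simp only [Matrix.map_apply, Matrix.mul_apply, Matrix.add_apply, map_sum, Derivation.leibniz,
    smul_eq_mul, ← Finset.sum_add_distrib]
  exact Finset.sum_congr rfl fun k _ => by ring

lemma map_add' (δ : Derivation ℤ A A) (M N : Matrix ι ι A) :
    (M + N).map δ = M.map δ + N.map δ := by
  ext i j; simp

lemma map_sub' (δ : Derivation ℤ A A) (M N : Matrix ι ι A) :
    (M - N).map δ = M.map δ - N.map δ := by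
  ext i j; simp

lemma map_neg' (δ : Derivation ℤ A A) (M : Matrix ι ι A) :
    (-M).map δ = - M.map δ := by
  ext i j; simp

lemma map_sum' {κ : Type*} (s : Finset κ) (δ : Derivation ℤ A A) (M : κ → Matrix ι ι A) :
    (∑ k ∈ s, M k).map δ = ∑ k ∈ s, (M k).map δ := by
  ext i j; simp [Matrix.sum_apply]

lemma map_smul' (δ : Derivation ℤ A A) (a : A) (M : Matrix ι ι A) :
    (a • M).map δ = δ a • M + a • M.map δ := by
  ext i j; simp [Derivation.leibniz]; ring

lemma map_zero' (δ : Derivation ℤ A A) : (0 : Matrix ι ι A).map δ = 0 := by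
  ext i j; simp

lemma map_one' (δ : Derivation ℤ A A) : (1 : Matrix ι ι A).map δ = 0 := by
  ext i j
  by_cases h : i = j
  · subst h; simp
  · simp [h]

lemma trace_map' (δ : Derivation ℤ A A) (M : Matrix ι ι A) :
    δ (Matrix.trace M) = Matrix.trace (M.map δ) := by
  simp [Matrix.trace]

/-- Algebraic data of a Ricci-flat Kähler metric. -/
structure Data (A : Type*) [CommRing A] [StarRing A] (ι : Type*) [Fintype ι] [DecidableEq ι] where
  d : ι → Derivation ℤ A A
  db : ι → Derivation ℤ A A
  g : Matrix ι ι A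
  h : Matrix ι ι A
  hd : ∀ i a, star (d i a) = db i (star a)
  dd : ∀ i j a, d i (d j a) = d j (d i a)
  ddb : ∀ i j a, db i (d j a) = d j (db i a)
  gh : g * h = 1
  hg : h * g = 1
  gherm : gᴴ = g
  hherm : hᴴ = h
  kah : ∀ i j k, d k (g i j) = d i (g k j)
  ric : ∀ i j, db j (Matrix.trace (g.map (d i) * h)) = 0

namespace Data

variable (D : Data A ι)

def Γ (k : ι) : Matrix ι ι A := D.g.map (D.d k) * D.h

def F (j k : ι) : Matrix ι ι A := (D.Γ k).map (D.db j)

def cov (i : ι) (X : ι → Matrix ι ι A) (k : ι) : Matrix ι ι A :=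
  (X k).map (D.d i) + X k * D.Γ i - D.Γ i * X k - ∑ p, D.Γ i k p • X p

def ip (X Y : ι → Matrix ι ι A) : A :=
  ∑ k, ∑ l, D.h l k * Matrix.trace (X k * D.g * (Y l)ᴴ * D.h)

def Cv (j : ι) : ι → Matrix ι ι A := D.cov j D.Γ

def S : A := D.ip D.Γ D.Γ

def lap (f : A) : A := ∑ i, ∑ j, D.h j i * D.d i (D.db j f)

lemma hdb (i : ι) (a : A) : star (D.db i a) = D.d i (star a) := by
  rw [← star_star (D.d i (star a)), D.hd, star_star]

lemma map_star (i : ι) (M : Matrix ι ι A) : Mᴴ.map (D.d i) = (M.map (D.db i))ᴴ := by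
  ext a b; simp [D.hdb]

lemma map_star' (i : ι) (M : Matrix ι ι A) : Mᴴ.map (D.db i) = (M.map (D.d i))ᴴ := by
  ext a b; simp [D.hd]

lemma dg (i : ι) : D.g.map (D.d i) = D.Γ i * D.g := by
  simp [Γ, Matrix.mul_assoc, D.hg]

lemma dbg (i : ι) : D.g.map (D.db i) = D.g * (D.Γ i)ᴴ := by
  conv_lhs => rw [← D.gherm]
  rw [map_star', dg, Matrix.conjTranspose_mul, D.gherm]

lemma dh (i : ι) : D.h.map (D.d i) = - (D.h * D.Γ i) := by
  have h1 := map_mul' (D.d i) D.g D.h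
  rw [D.gh, map_one'] at h1
  have h2 : D.h * (D.g * D.h.map (D.d i)) = - (D.h * D.Γ i) := by
    rw [← mul_neg]; congr 1
    rw [eq_neg_iff_add_eq_zero, add_comm]; exact h1.symm
  rwa [← Matrix.mul_assoc, D.hg, Matrix.one_mul] at h2

lemma dbh (i : ι) : D.h.map (D.db i) = - ((D.Γ i)ᴴ * D.h) := by
  conv_lhs => rw [← D.hherm]
  rw [map_star', dh]; simp [D.hherm]

lemma star_h (i j : ι) : star (D.h i j) = D.h j i := by
  conv_rhs => rw [← D.hherm]
  simp

lemma star_g (i j : ι) : star (D.g i j) = D.g j i := by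
  conv_rhs => rw [← D.gherm]
  simp

lemma ip_add_left (X X' Y) : D.ip (X + X') Y = D.ip X Y + D.ip X' Y := by
  simp only [ip, ← Finset.sum_add_distrib]
  refine Finset.sum_congr rfl fun k _ => Finset.sum_congr rfl fun l _ => ?_
  simp [Matrix.add_mul, mul_add]

lemma ip_smul_left (a : A) (X Y) : D.ip (a • X) Y = a * D.ip X Y := by
  simp only [ip, Finset.mul_sum]
  refine Finset.sum_congr rfl fun k _ => Finset.sum_congr rfl fun l _ => ?_
  simp; ring

lemma ip_zero_left (Y) : D.ip 0 Y = 0 := by simp [ip]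

lemma ip_sum_left {κ : Type*} (s : Finset κ) (X : κ → ι → Matrix ι ι A) (Y) :
    D.ip (∑ k ∈ s, X k) Y = ∑ k ∈ s, D.ip (X k) Y := by
  classical
  induction s using Finset.induction_on with
  | empty => simp [ip_zero_left]
  | insert a s ha ih => rw [Finset.sum_insert ha, Finset.sum_insert ha, ip_add_left, ih]

lemma star_ip (X Y) : star (D.ip X Y) = D.ip Y X := by
  simp only [ip, star_sum]
  rw [Finset.sum_comm]
  refine Finset.sum_congr rfl fun k _ => Finset.sum_congr rfl fun l _ => ?_
  rw [star_mul', D.star_h, ← Matrix.trace_conjTranspose]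
  congr 1
  simp only [Matrix.conjTranspose_mul, D.hherm, D.gherm, Matrix.conjTranspose_conjTranspose]
  rw [Matrix.trace_mul_comm]
  simp only [Matrix.mul_assoc]

lemma leib (i : ι) (X Y : ι → Matrix ι ι A) :
    D.d i (D.ip X Y) = D.ip (D.cov i X) Y + D.ip X (fun l => (Y l).map (D.db i)) := by
  have key : ∀ k l, D.d i (Matrix.trace (X k * D.g * (Y l)ᴴ * D.h)) =
      Matrix.trace (((X k).map (D.d i) + X k * D.Γ i - D.Γ i * X k) * D.g * (Y l)ᴴ * D.h)
      + Matrix.trace (X k * D.g * ((Y l).map (D.db i))ᴴ * D.h) := by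
    intro k l
    rw [trace_map', map_mul', map_mul', map_mul', map_star, dg, dh]
    have : Matrix.trace (X k * D.g * (Y l)ᴴ * (D.h * D.Γ i)) =
        Matrix.trace (D.Γ i * X k * D.g * (Y l)ᴴ * D.h) := by
      rw [← Matrix.mul_assoc, Matrix.trace_mul_comm]
      simp only [Matrix.mul_assoc]
    simp only [Matrix.add_mul, Matrix.sub_mul, Matrix.trace_add, Matrix.trace_sub, Matrix.mul_neg,
      Matrix.trace_neg, this]
    simp only [Matrix.mul_assoc]
    ring
  have hh : ∀ l k, D.d i (D.h l k) = - ∑ p, D.h l p * D.Γ i p k := by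
    intro l k
    have := congrFun (congrFun (D.dh i) l) k
    simpa [Matrix.mul_apply] using this
  have e1 : D.d i (D.ip X Y) = ∑ k, ∑ l, (D.d i (D.h l k) * Matrix.trace (X k * D.g * (Y l)ᴴ * D.h)
      + D.h l k * D.d i (Matrix.trace (X k * D.g * (Y l)ᴴ * D.h))) := by
    simp only [ip, map_sum, Derivation.leibniz, smul_eq_mul]
    refine Finset.sum_congr rfl fun k _ => Finset.sum_congr rfl fun l _ => ?_
    ring
  have e2 : ∑ k, ∑ l, D.d i (D.h l k) * Matrix.trace (X k * D.g * (Y l)ᴴ * D.h) =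
      ∑ k, ∑ l, D.h l k * (- ∑ p, D.Γ i k p * Matrix.trace (X p * D.g * (Y l)ᴴ * D.h)) := by
    simp only [hh, neg_mul, mul_neg, Finset.sum_neg_distrib, Finset.sum_mul, Finset.mul_sum]
    congr 1
    rw [Finset.sum_comm]
    conv_rhs => rw [Finset.sum_comm]
    refine Finset.sum_congr rfl fun l _ => ?_
    rw [Finset.sum_comm]
    refine Finset.sum_congr rfl fun k _ => Finset.sum_congr rfl fun p _ => ?_
    ring
  rw [e1]
  simp only [Finset.sum_add_distrib]
  rw [e2]
  simp only [ip, cov, ← Finset.sum_add_distrib, key]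
  refine Finset.sum_congr rfl fun k _ => Finset.sum_congr rfl fun l _ => ?_
  simp only [Matrix.sub_mul, Matrix.trace_sub, Matrix.sum_mul, Matrix.trace_sum, Matrix.smul_mul,
    Matrix.trace_smul, smul_eq_mul]
  ring

lemma leib_bar (j : ι) (X Y : ι → Matrix ι ι A) :
    D.db j (D.ip X Y) = D.ip (fun l => (X l).map (D.db j)) Y + D.ip X (D.cov j Y) := by
  rw [← D.star_ip Y X, ← D.hd, leib, star_add, star_ip, star_ip, add_comm]

lemma kahΓ (i k p : ι) : D.Γ i k p = D.Γ k i p := by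
  simp only [Γ, Matrix.mul_apply, Matrix.map_apply]
  exact Finset.sum_congr rfl fun q _ => by rw [D.kah]

lemma kahb (e b j : ι) : D.db j (D.g e b) = D.db b (D.g e j) := by
  rw [← D.star_g b e, ← D.hd, D.kah, D.hd, D.star_g]

lemma Fg (i j : ι) : D.F j i * D.g =
    (D.g.map (D.d i)).map (D.db j) - D.g.map (D.d i) * D.h * D.g.map (D.db j) := by
  rw [F, Γ, map_mul', dbh, dbg]
  simp only [Matrix.add_mul, Matrix.mul_neg, Matrix.neg_mul, Matrix.mul_assoc, D.hg, Matrix.mul_one]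
  rw [← Matrix.mul_assoc D.h D.g, D.hg, Matrix.one_mul, sub_eq_add_neg]

lemma Fg_symm (i j a b : ι) : (D.F j i * D.g) a b = (D.F b a * D.g) i j := by
  rw [Fg, Fg]
  simp only [Matrix.sub_apply, Matrix.mul_apply, Matrix.map_apply]
  congr 1
  · rw [D.kah, D.ddb, D.kahb, D.ddb]
  · refine Finset.sum_congr rfl fun c _ => ?_
    rw [D.kahb]
    congr 1
    refine Finset.sum_congr rfl fun c _ => ?_
    rw [D.kah]

lemma he : ∑ i, ∑ j, D.h j i • D.F j i = 0 := by
  have : (∑ i, ∑ j, D.h j i • D.F j i) * D.g = 0 := by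
    ext a b
    simp only [Matrix.sum_mul, Matrix.smul_mul, Matrix.sum_apply, Matrix.smul_apply, smul_eq_mul,
      D.Fg_symm _ _ a b, Matrix.zero_apply]
    have h1 : Matrix.trace (D.F b a * D.g * D.h) = 0 := by
      rw [Matrix.mul_assoc, D.gh, Matrix.mul_one, F, ← trace_map']
      exact D.ric a b
    rw [← h1, Matrix.trace]
    simp only [Matrix.diag_apply]
    refine Finset.sum_congr rfl fun i _ => ?_
    rw [Matrix.mul_apply]
    exact Finset.sum_congr rfl fun j _ => mul_comm _ _
  have h2 := congrArg (· * D.h) this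
  simpa [Matrix.mul_assoc, D.gh] using h2

lemma dΓ (j k : ι) : (D.Γ k).map (D.d j) + D.Γ k * D.Γ j =
    (D.Γ j).map (D.d k) + D.Γ j * D.Γ k := by
  have : ∀ j k, (D.Γ k).map (D.d j) + D.Γ k * D.Γ j = (D.g.map (D.d k)).map (D.d j) * D.h := by
    intro j k
    conv_lhs => rw [Γ, map_mul', dh]
    simp [Matrix.mul_assoc]
  rw [this, this]
  congr 1
  ext a b
  simp [D.dd j k]

lemma mapddb (i j : ι) (M : Matrix ι ι A) :
    (M.map (D.d j)).map (D.db i) = (M.map (D.db i)).map (D.d j) := by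
  ext a b; simp [D.ddb]

lemma bianchi (i j k : ι) :
    (D.F i k).map (D.d j) + D.F i k * D.Γ j - D.Γ j * D.F i k =
    (D.F i j).map (D.d k) + D.F i j * D.Γ k - D.Γ k * D.F i j := by
  have h1 := congrArg (fun M => M.map (D.db i)) (D.dΓ j k)
  simp only [map_add', map_mul', mapddb] at h1
  change (D.F i k).map (D.d j) + (D.F i k * D.Γ j + D.Γ k * D.F i j) =
    (D.F i j).map (D.d k) + (D.F i j * D.Γ k + D.Γ j * D.F i k) at h1
  rw [sub_eq_sub_iff_add_eq_add, add_assoc, h1]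
  abel

lemma contract1 : ∑ i, ∑ j, D.h i j • D.cov j (D.F i) = 0 := by
  ext1 k
  simp only [Finset.sum_apply, Pi.smul_apply, Pi.zero_apply, cov, bianchi D _ _ k]
  have hk := congrArg (fun M => M.map (D.d k)) D.he
  rw [Finset.sum_comm] at hk
  simp only [map_sum', map_smul', map_zero'] at hk
  have hh : ∀ l m, D.d k (D.h l m) = - ∑ p, D.h l p * D.Γ k p m := by
    intro l m
    have := congrFun (congrFun (D.dh k) l) m
    simpa [Matrix.mul_apply] using this
  have he1 : ∑ i, ∑ j, D.h i j • (D.F i j * D.Γ k) = 0 := by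
    have := congrArg (· * D.Γ k) D.he
    rw [Finset.sum_comm] at this
    simpa [Matrix.sum_mul] using this
  have he2 : ∑ i, ∑ j, D.h i j • (D.Γ k * D.F i j) = 0 := by
    have := congrArg (D.Γ k * ·) D.he
    rw [Finset.sum_comm] at this
    simpa [Matrix.mul_sum] using this
  simp only [smul_sub, smul_add, Finset.sum_add_distrib, Finset.sum_sub_distrib, he1, he2]
  simp only [Finset.sum_add_distrib, hh] at hk
  have e : ∑ i, ∑ j, D.h i j • ∑ p, D.Γ j k p • D.F i p =
      ∑ i, ∑ j, (∑ p, D.h i p * D.Γ k p j) • D.F i j := by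
    refine Finset.sum_congr rfl fun i _ => ?_
    simp only [Finset.smul_sum, Finset.sum_smul, smul_smul]
    rw [Finset.sum_comm]
    refine Finset.sum_congr rfl fun j _ => Finset.sum_congr rfl fun p _ => ?_
    rw [D.kahΓ]
  rw [e]
  simp only [neg_smul, Finset.sum_neg_distrib] at hk
  rw [add_zero, sub_zero, ← hk]; abel

lemma contract2 : ∑ i, ∑ j, D.h i j • (fun k => (D.Cv j k).map (D.db i)) = 0 := by
  rw [← D.contract1]
  ext1 k
  simp only [Finset.sum_apply, Pi.smul_apply, Cv, cov]
  have e : ∀ i j, ((D.Γ k).map (D.d j) + D.Γ k * D.Γ j - D.Γ j * D.Γ k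
      - ∑ p, D.Γ j k p • D.Γ p).map (D.db i) =
      ((D.F i k).map (D.d j) + D.F i k * D.Γ j - D.Γ j * D.F i k - ∑ p, D.Γ j k p • D.F i p) +
      (D.Γ k * D.F i j - D.F i j * D.Γ k - ∑ p, D.F i j k p • D.Γ p) := by
    intro i j
    simp only [map_add', map_sub', map_mul', map_sum', map_smul', mapddb, Finset.sum_add_distrib]
    simp only [F, Matrix.map_apply]
    abel
  simp only [e, smul_add, Finset.sum_add_distrib]
  rw [add_eq_left]
  have h0 := D.he
  rw [Finset.sum_comm] at h0
  have he1 : ∑ i, ∑ j, D.h i j • (D.F i j * D.Γ k) = 0 := by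
    have := congrArg (· * D.Γ k) h0
    simpa [Matrix.sum_mul] using this
  have he2 : ∑ i, ∑ j, D.h i j • (D.Γ k * D.F i j) = 0 := by
    have := congrArg (D.Γ k * ·) h0
    simpa [Matrix.mul_sum] using this
  have he3 : ∑ i, ∑ j, D.h i j • ∑ p, D.F i j k p • D.Γ p = 0 := by
    have : ∑ p, (∑ i, ∑ j, D.h i j • D.F i j) k p • D.Γ p = 0 := by
      rw [h0]; simp
    rw [← this]
    simp only [Matrix.sum_apply, Finset.sum_smul, Finset.smul_sum, Matrix.smul_apply, smul_eq_mul,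
      smul_smul]
    conv_rhs => rw [Finset.sum_comm]
    refine Finset.sum_congr rfl fun i _ => ?_
    rw [Finset.sum_comm]
  simp only [smul_sub, Finset.sum_sub_distrib, he1, he2, he3]
  simp

lemma dbS (j : ι) : D.db j D.S = D.ip (D.F j) D.Γ + D.ip D.Γ (D.Cv j) := by
  rw [S, leib_bar]; rfl

lemma lapS : D.lap D.S = ∑ i, ∑ j, D.h j i * (D.ip (D.F j) (D.F i) + D.ip (D.Cv i) (D.Cv j)) := by
  have e : ∀ i j, D.d i (D.db j D.S) = (D.ip (D.F j) (D.F i) + D.ip (D.Cv i) (D.Cv j)) +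
      (D.ip (D.cov i (D.F j)) D.Γ + D.ip D.Γ (fun k => (D.Cv j k).map (D.db i))) := by
    intro i j
    rw [dbS, map_add, leib, leib]
    change D.ip (D.cov i (D.F j)) D.Γ + D.ip (D.F j) (D.F i) + (D.ip (D.Cv i) (D.Cv j) + _) = _
    ring
  simp only [lap, e, mul_add, Finset.sum_add_distrib]
  rw [add_eq_left]
  have z1 : ∑ i, ∑ j, D.h j i * D.ip (D.cov i (D.F j)) D.Γ = 0 := by
    have := congrArg (fun X => D.ip X D.Γ) D.contract1
    simp only [ip_sum_left, ip_smul_left, ip_zero_left] at this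
    rw [Finset.sum_comm]; exact this
  have z2 : ∑ i, ∑ j, D.h j i * D.ip D.Γ (fun k => (D.Cv j k).map (D.db i)) = 0 := by
    have := congrArg (fun X => star (D.ip X D.Γ)) D.contract2
    simp only [ip_sum_left, ip_smul_left, ip_zero_left, star_sum, star_mul', star_ip,
      star_h, star_zero] at this
    exact this
  rw [z1, z2, add_zero]

lemma lapg (a b : ι) : D.lap (D.g a b) =
    ∑ i, ∑ j, D.h j i * (D.Γ i * D.g * (D.Γ j)ᴴ) a b := by
  have e : ∀ i j, D.d i (D.db j (D.g a b)) = (D.F j i * D.g) a b +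
      (D.Γ i * D.g * (D.Γ j)ᴴ) a b := by
    intro i j
    rw [Fg, dbg, ← Matrix.mul_assoc]
    simp [D.ddb, Γ]
  simp only [lap, e, mul_add, Finset.sum_add_distrib]
  rw [add_eq_right]
  have h1 := congrArg (· * D.g) D.he
  have := congrFun (congrFun h1 a) b
  simp only [Matrix.sum_mul, Matrix.sum_apply, Matrix.smul_mul, Matrix.smul_apply, smul_eq_mul,
    Matrix.zero_mul, Matrix.zero_apply] at this
  exact this

end Data
end alg
end Calabi
namespace Calabi

open scoped ContDiff

section jac
variable {ι : Type*} [Fintype ι] [DecidableEq ι]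

lemma jacobi_alg {R : Type*} [CommRing R] (M M' : Matrix ι ι R) :
    ∑ σ : Equiv.Perm ι, (Equiv.Perm.sign σ : ℤ) • ∑ i, (∏ j ∈ Finset.univ.erase i, M (σ j) j) * M' (σ i) i
      = Matrix.trace (M.adjugate * M') := by
  have h1 : ∀ i, (M.adjugate * M') i i = (M.updateCol i (fun a => M' a i)).det := by
    intro i
    rw [← Matrix.cramer_apply, Matrix.cramer_eq_adjugate_mulVec]
    rfl
  simp only [Matrix.trace, Matrix.diag_apply, h1, Matrix.det_apply, Finset.smul_sum]
  rw [Finset.sum_comm]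
  refine Finset.sum_congr rfl fun i _ => Finset.sum_congr rfl fun σ _ => ?_
  rw [← Finset.mul_prod_erase Finset.univ _ (Finset.mem_univ i)]
  simp only [Matrix.updateCol_self]
  rw [mul_comm]
  have : ∏ j ∈ Finset.univ.erase i, M.updateCol i (fun a => M' a i) (σ j) j =
      ∏ j ∈ Finset.univ.erase i, M (σ j) j :=
    Finset.prod_congr rfl fun j hj => by
      rw [Matrix.updateCol_ne (Finset.ne_of_mem_erase hj)]
  rw [this]
  rfl

lemma jacobi {M : ℝ → Matrix ι ι ℂ} {M' : Matrix ι ι ℂ} {t : ℝ}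
    (h : ∀ i j, HasDerivAt (fun s => M s i j) (M' i j) t) :
    HasDerivAt (fun s => (M s).det) (Matrix.trace ((M t).adjugate * M')) t := by
  rw [← jacobi_alg]
  simp only [Matrix.det_apply]
  refine HasDerivAt.fun_sum fun σ _ => ?_
  have h1 := HasDerivAt.fun_finsetProd (u := Finset.univ) (fun i _ => h (σ i) i)
  simp only [smul_eq_mul] at h1
  simpa [Units.smul_def] using h1.const_mul (((Equiv.Perm.sign σ : ℤ) : ℂ))

end jac

variable {N : ℕ}

lemma wdz_smooth (i : Fin N) {f : Cn N → ℂ} (hf : ContDiff ℝ ∞ f) : ContDiff ℝ ∞ (wdz i f) := by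
  have h : ContDiff ℝ ∞ (fderiv ℝ f) := hf.fderiv_right (by simp)
  unfold wdz
  fun_prop

lemma wdzbar_smooth (i : Fin N) {f : Cn N → ℂ} (hf : ContDiff ℝ ∞ f) :
    ContDiff ℝ ∞ (wdzbar i f) := by
  have h : ContDiff ℝ ∞ (fderiv ℝ f) := hf.fderiv_right (by simp)
  unfold wdzbar
  fun_prop

lemma star_fderiv {f : Cn N → ℂ} (x v : Cn N) :
    fderiv ℝ (fun y => star (f y)) x v = star (fderiv ℝ f x v) := by
  rw [fderiv_star]; rfl

def Sm (N : ℕ) : StarSubalgebra ℂ (Cn N → ℂ) where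
  carrier := {f | ContDiff ℝ ∞ f}
  mul_mem' := fun {a b} (ha : ContDiff ℝ ∞ a) (hb : ContDiff ℝ ∞ b) =>
    show ContDiff ℝ ∞ (fun x => a x * b x) from ContDiff.mul ha hb
  add_mem' := fun {a b} (ha : ContDiff ℝ ∞ a) (hb : ContDiff ℝ ∞ b) =>
    show ContDiff ℝ ∞ (fun x => a x + b x) from ContDiff.add ha hb
  algebraMap_mem' := fun r => show ContDiff ℝ ∞ (fun _ => r) from contDiff_const
  star_mem' := fun {f} ha => by
    have : ContDiff ℝ ∞ (fun x => Complex.conjCLE (f x)) := Complex.conjCLE.contDiff.comp (show ContDiff ℝ ∞ f from ha)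
    exact this

lemma Sm_cd (f : Sm N) : ContDiff ℝ ∞ (f : Cn N → ℂ) := f.2

lemma Sm_diff (f : Sm N) (x) : DifferentiableAt ℝ (f : Cn N → ℂ) x :=
  ((Sm_cd f).differentiable (by simp)).differentiableAt

/-- directional derivative in the algebra -/
def dv (v : Cn N) : Derivation ℤ (Sm N) (Sm N) :=
  Derivation.mk'
    { toFun := fun f => ⟨fun x => fderiv ℝ (f : Cn N → ℂ) x v, by
        have h : ContDiff ℝ ∞ (fderiv ℝ (f : Cn N → ℂ)) := ContDiff.fderiv_right (Sm_cd f) (by simp)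
        show ContDiff ℝ ∞ _
        fun_prop⟩
      map_add' := fun a b => by
        ext x
        show fderiv ℝ ((a : Cn N → ℂ) + (b : Cn N → ℂ)) x v = _
        rw [fderiv_add (Sm_diff a x) (Sm_diff b x)]; rfl
      map_smul' := fun r a => by
        ext x
        show fderiv ℝ (r • (a : Cn N → ℂ)) x v = _
        rw [fderiv_const_smul (Sm_diff a x)]; rfl }
    (fun a b => by
      ext x
      show fderiv ℝ ((a : Cn N → ℂ) * (b : Cn N → ℂ)) x v = _
      rw [fderiv_mul (Sm_diff a x) (Sm_diff b x)]
      rfl)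

lemma dv_apply (v : Cn N) (f : Sm N) (x) : (dv v f : Cn N → ℂ) x = fderiv ℝ (f : Cn N → ℂ) x v := rfl

lemma dv_comm (v w : Cn N) (f : Sm N) : dv v (dv w f) = dv w (dv v f) := by
  ext x
  simp only [dv_apply]
  have h : ContDiff ℝ ∞ (fderiv ℝ (f : Cn N → ℂ)) := ContDiff.fderiv_right (Sm_cd f) (by simp)
  have hs : IsSymmSndFDerivAt ℝ (f : Cn N → ℂ) x :=
    (ContDiff.contDiffAt (Sm_cd f)).isSymmSndFDerivAt (by
      rw [minSmoothness_of_isRCLikeNormedField]; exact WithTop.coe_le_coe.2 (le_top : (2 : ℕ∞) ≤ ⊤))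
  have e : ∀ v w, fderiv ℝ (dv w f : Cn N → ℂ) x v = fderiv ℝ (fderiv ℝ (f : Cn N → ℂ)) x v w := by
    intro v w
    show fderiv ℝ (fun y => fderiv ℝ (f : Cn N → ℂ) y w) x v = _
    rw [fderiv_clm_apply (h.differentiable (by simp)).differentiableAt (by fun_prop)]
    simp
  rw [e, e, hs]

lemma dv_star (v : Cn N) (f : Sm N) : star (dv v f) = dv v (star f) := by
  ext x
  exact (star_fderiv x v).symm

/-- constants -/
def cst (c : ℂ) : Sm N := algebraMap ℂ (Sm N) c

lemma cst_apply (c : ℂ) (x) : ((cst c : Sm N) : Cn N → ℂ) x = c := rfl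

lemma dv_cst (v : Cn N) (c : ℂ) : dv v (cst c) = 0 := by
  ext x
  rw [dv_apply]
  show fderiv ℝ (fun _ => c) x v = 0
  simp

lemma star_cst (c : ℂ) : star (cst c : Sm N) = cst (star c) := by
  ext x; rfl

def dz (i : Fin N) : Derivation ℤ (Sm N) (Sm N) :=
  (cst (2⁻¹) : Sm N) • (dv (coordDir N i) - (cst Complex.I : Sm N) • dv (Complex.I • coordDir N i))

def dzb (i : Fin N) : Derivation ℤ (Sm N) (Sm N) :=
  (cst (2⁻¹) : Sm N) • (dv (coordDir N i) + (cst Complex.I : Sm N) • dv (Complex.I • coordDir N i))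

lemma dz_apply (i : Fin N) (f : Sm N) : (dz i f : Cn N → ℂ) = wdz i f := rfl
lemma dzb_apply (i : Fin N) (f : Sm N) : (dzb i f : Cn N → ℂ) = wdzbar i f := rfl

lemma dz_def (i : Fin N) (f : Sm N) : dz i f =
   cst (2⁻¹) * (dv (coordDir N i) f - cst Complex.I * dv (Complex.I • coordDir N i) f) := rfl
lemma dzb_def (i : Fin N) (f : Sm N) : dzb i f =
   cst (2⁻¹) * (dv (coordDir N i) f + cst Complex.I * dv (Complex.I • coordDir N i) f) := rfl

lemma dz_star (i : Fin N) (f : Sm N) : star (dz i f) = dzb i (star f) := by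
  simp only [dz_def, dzb_def, star_mul', star_sub, star_cst, dv_star]
  congr 1
  · simp
  · have : (cst (star Complex.I) : Sm N) = - cst Complex.I := by
      ext x; simp [cst_apply]
    rw [this]; ring

lemma dz_comm (i j : Fin N) (f : Sm N) : dz i (dz j f) = dz j (dz i f) := by
  simp only [dz_def, Derivation.leibniz, map_sub, dv_cst, smul_eq_mul]
  simp only [dv_comm (coordDir N j), dv_comm (Complex.I • coordDir N j)]
  ring

lemma dzb_dz (i j : Fin N) (f : Sm N) : dzb i (dz j f) = dz j (dzb i f) := by
  simp only [dz_def, dzb_def, Derivation.leibniz, map_sub, map_add, dv_cst, smul_eq_mul]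
  simp only [dv_comm (coordDir N j), dv_comm (Complex.I • coordDir N j)]
  ring

/-- evaluation -/
def ev (x : Cn N) : Sm N →+* ℂ := (Pi.evalRingHom (fun _ : Cn N => ℂ) x).comp (Sm N).subtype.toRingHom

lemma ev_apply (x : Cn N) (f : Sm N) : ev x f = (f : Cn N → ℂ) x := rfl

lemma ev_star (x : Cn N) (f : Sm N) : ev x (star f) = star (ev x f) := rfl

lemma Sm.ext_ev {f f' : Sm N} (h : ∀ x, ev x f = ev x f') : f = f' := by
  ext x; exact h x

lemma isUnit_of_ne (f : Sm N) (hf : ∀ x, ev x f ≠ 0) : IsUnit f := by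
  refine IsUnit.of_mul_eq_one ⟨fun x => ((f : Cn N → ℂ) x)⁻¹, ContDiff.inv (Sm_cd f) hf⟩ ?_
  ext x
  exact mul_inv_cancel₀ (hf x)

/-- log det derivative -/
lemma fderiv_logdet {g : Cn N → Matrix (Fin N) (Fin N) ℂ}
    (hs : ∀ i j, ContDiff ℝ ∞ (fun x => g x i j)) (hdet : ∀ x, (g x).det ∈ Complex.slitPlane)
    (x v : Cn N) : fderiv ℝ (fun w => Complex.log ((g w).det)) x v =
      Matrix.trace ((g x)⁻¹ * Matrix.of (fun i j => fderiv ℝ (fun y => g y i j) x v)) := by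
  have hdiff : DifferentiableAt ℝ (fun w => Complex.log ((g w).det)) x := by
    have h1 : DifferentiableAt ℝ (fun w => (g w).det) x := by
      simp only [Matrix.det_apply]
      have : ∀ i j, DifferentiableAt ℝ (fun x => g x i j) x := fun i j =>
        ((hs i j).differentiable (by simp)).differentiableAt
      fun_prop
    exact DifferentiableAt.comp (g := Complex.log) (f := fun w => (g w).det) x
      ((Complex.differentiableAt_log (hdet x)).restrictScalars ℝ) h1
  have hline : HasDerivAt (fun s : ℝ => x + s • v) v 0 := by
    simpa using ((hasDerivAt_id (0 : ℝ)).smul_const v).const_add x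
  have hcomp : ∀ {f : Cn N → ℂ}, DifferentiableAt ℝ f x →
      HasDerivAt (fun s : ℝ => f (x + s • v)) (fderiv ℝ f x v) 0 := by
    intro f hf
    have : HasFDerivAt f (fderiv ℝ f x) (x + (0 : ℝ) • v) := by simpa using hf.hasFDerivAt
    exact this.comp_hasDerivAt 0 hline
  have h1 := hcomp hdiff
  have h2 : HasDerivAt (fun s : ℝ => (g (x + s • v)).det) _ 0 :=
    jacobi (M' := Matrix.of (fun i j => fderiv ℝ (fun y => g y i j) x v))
      (fun i j => hcomp ((hs i j).differentiable (by simp)).differentiableAt)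
  have h3 := h2.clog_real (by simpa using hdet x)
  rw [h1.unique h3]
  simp [Matrix.inv_def, Ring.inverse_eq_inv', div_eq_inv_mul]

end Calabi
set_option linter.unusedSimpArgs false
namespace Calabi
section pos
open scoped ComplexOrder

variable {ι κ : Type*} [Fintype ι] [DecidableEq ι] [Fintype κ]

lemma psd_sum {V : Type*} [AddCommGroup V] [Module ℂ V] (q : V → V → ℂ) (hq0 : ∀ v, 0 ≤ (q v v).re)
    (hq : ∀ (c : ι → ℂ) (X : ι → V), q (∑ k, c k • X k) (∑ k, c k • X k) =
      ∑ k, ∑ l, c k * star (c l) * q (X k) (X l))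
    {P : Matrix ι ι ℂ} (hP : P.PosSemidef) (X : ι → V) :
    0 ≤ (∑ k, ∑ l, P l k * q (X k) (X l)).re := by
  obtain ⟨m, v, rfl⟩ := Matrix.posSemidef_iff_eq_sum_vecMulVec.mp hP
  have : ∑ k, ∑ l, (∑ p, Matrix.vecMulVec (v p) (star (v p))) l k * q (X k) (X l) =
      ∑ p, q (∑ k, star (v p k) • X k) (∑ k, star (v p k) • X k) := by
    simp only [hq, Matrix.sum_apply, Matrix.vecMulVec_apply, Finset.sum_mul, star_star, Pi.star_apply]
    conv_rhs => rw [Finset.sum_comm]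
    refine Finset.sum_congr rfl fun k _ => ?_
    rw [Finset.sum_comm]
    refine Finset.sum_congr rfl fun p _ => Finset.sum_congr rfl fun l _ => ?_
    ring
  rw [this, Complex.re_sum]
  exact Finset.sum_nonneg fun p _ => hq0 _

lemma psd_trace {P Q : Matrix ι ι ℂ} (hP : P.PosSemidef) (hQ : Q.PosSemidef) (X : Matrix ι ι ℂ) :
    0 ≤ (Matrix.trace (X * Q * Xᴴ * P)).re := by
  obtain ⟨m, v, rfl⟩ := Matrix.posSemidef_iff_eq_sum_vecMulVec.mp hP
  have h1 := hQ.mul_mul_conjTranspose_same X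
  rw [Matrix.mul_sum, Matrix.trace_sum, Complex.re_sum]
  refine Finset.sum_nonneg fun p _ => ?_
  have h2 := h1.dotProduct_mulVec_nonneg (v p)
  have h3 : Matrix.trace (X * Q * Xᴴ * Matrix.vecMulVec (v p) (star (v p))) =
      star (v p) ⬝ᵥ (X * Q * Xᴴ) *ᵥ (v p) := by
    rw [Matrix.mul_vecMulVec, Matrix.trace_vecMulVec, dotProduct_comm]
  rw [h3]
  exact (Complex.le_def.1 h2).1

def ipc (H Q P : Matrix ι ι ℂ) (X Y : ι → Matrix ι ι ℂ) : ℂ :=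
  ∑ k, ∑ l, H l k * Matrix.trace (X k * Q * (Y l)ᴴ * P)

lemma ipc_pos {H Q P : Matrix ι ι ℂ} (hH : H.PosSemidef) (hQ : Q.PosSemidef) (hP : P.PosSemidef)
    (X : ι → Matrix ι ι ℂ) : 0 ≤ (ipc H Q P X X).re := by
  refine psd_sum (fun X Y => Matrix.trace (X * Q * Yᴴ * P)) (psd_trace hP hQ) ?_ hH X
  intro c X
  simp only [Matrix.conjTranspose_sum, Matrix.conjTranspose_smul, Matrix.sum_mul, Matrix.mul_sum,
    Matrix.smul_mul, Matrix.mul_smul, Matrix.trace_sum, Matrix.trace_smul, smul_eq_mul, Finset.mul_sum]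
  rw [Finset.sum_comm]
  refine Finset.sum_congr rfl fun k _ => Finset.sum_congr rfl fun l _ => ?_
  ring

lemma ipc_sesq {H Q P : Matrix ι ι ℂ} (c : ι → ℂ) (X : ι → ι → Matrix ι ι ℂ) :
    ipc H Q P (∑ k, c k • X k) (∑ k, c k • X k) =
      ∑ k, ∑ l, c k * star (c l) * ipc H Q P (X k) (X l) := by
  simp only [ipc, Finset.sum_apply, Pi.smul_apply,
    Matrix.conjTranspose_sum, Matrix.conjTranspose_smul, Matrix.sum_mul, Matrix.mul_sum,
    Matrix.smul_mul, Matrix.mul_smul, Matrix.trace_sum, Matrix.trace_smul, smul_eq_mul,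
    Finset.mul_sum]
  calc _ = ∑ a, ∑ b, ∑ i, ∑ j, H b a * (star (c i) * (c j * (X j a * Q * (X i b)ᴴ * P).trace)) := rfl
    _ = ∑ a, ∑ j, ∑ b, ∑ i, H b a * (star (c i) * (c j * (X j a * Q * (X i b)ᴴ * P).trace)) := by
        refine Finset.sum_congr rfl fun a _ => ?_
        rw [Finset.sum_comm]
        conv_rhs => rw [Finset.sum_comm]; enter [2, x]; rw [Finset.sum_comm]
        rw [Finset.sum_comm]
    _ = ∑ j, ∑ a, ∑ i, ∑ b, H b a * (star (c i) * (c j * (X j a * Q * (X i b)ᴴ * P).trace)) := by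
        rw [Finset.sum_comm]
        refine Finset.sum_congr rfl fun j _ => Finset.sum_congr rfl fun a _ => ?_
        rw [Finset.sum_comm]
    _ = _ := by
        refine Finset.sum_congr rfl fun j _ => ?_
        rw [Finset.sum_comm]
        refine Finset.sum_congr rfl fun i _ => Finset.sum_congr rfl fun a _ =>
          Finset.sum_congr rfl fun b _ => ?_
        ring

lemma ipc_pos2 {H Q P K : Matrix ι ι ℂ} (hH : H.PosSemidef) (hQ : Q.PosSemidef)
    (hP : P.PosSemidef) (hK : K.PosSemidef)
    (X : ι → ι → Matrix ι ι ℂ) : 0 ≤ (∑ i, ∑ j, K j i * ipc H Q P (X i) (X j)).re :=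
  psd_sum (ipc H Q P) (ipc_pos hH hQ hP) ipc_sesq hK X

lemma ipc_sub1 (H H' Q P : Matrix ι ι ℂ) (X Y) :
    ipc (H - H') Q P X Y = ipc H Q P X Y - ipc H' Q P X Y := by
  simp [ipc, sub_mul, Finset.sum_sub_distrib]
lemma ipc_sub2 (H Q Q' P : Matrix ι ι ℂ) (X Y) :
    ipc H (Q - Q') P X Y = ipc H Q P X Y - ipc H Q' P X Y := by
  simp [ipc, mul_sub, Matrix.mul_sub, Matrix.sub_mul, Finset.sum_sub_distrib]
lemma ipc_sub3 (H Q P P' : Matrix ι ι ℂ) (X Y) :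
    ipc H Q (P - P') X Y = ipc H Q P X Y - ipc H Q P' X Y := by
  simp [ipc, mul_sub, Matrix.mul_sub, Finset.sum_sub_distrib]
lemma ipc_smul1 (a : ℂ) (H Q P : Matrix ι ι ℂ) (X Y) :
    ipc (a • H) Q P X Y = a * ipc H Q P X Y := by
  simp [ipc, Finset.mul_sum, mul_assoc]
lemma ipc_smul2 (a : ℂ) (H Q P : Matrix ι ι ℂ) (X Y) :
    ipc H (a • Q) P X Y = a * ipc H Q P X Y := by
  simp [ipc, Finset.mul_sum, mul_left_comm]
lemma ipc_smul3 (a : ℂ) (H Q P : Matrix ι ι ℂ) (X Y) :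
    ipc H Q (a • P) X Y = a * ipc H Q P X Y := by
  simp [ipc, Finset.mul_sum, mul_left_comm]

/-- pinching hypothesis -/
structure Pinch (C : ℝ) (g h : Matrix ι ι ℂ) : Prop where
  gpos : g.PosDef
  hpos : h.PosDef
  glo : (g - ((C⁻¹ : ℝ) : ℂ) • 1).PosSemidef
  ghi : ((C : ℂ) • 1 - g).PosSemidef
  hlo : (h - ((C⁻¹ : ℝ) : ℂ) • 1).PosSemidef
  hhi : ((C : ℂ) • 1 - h).PosSemidef

lemma quad_eq (g : Matrix ι ι ℂ) (v : ι → ℂ) :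
    star v ⬝ᵥ (g *ᵥ v) = ∑ i, ∑ j, starRingEnd ℂ (v i) * g i j * v j := by
  simp [dotProduct, Matrix.mulVec, Finset.mul_sum, mul_assoc]

lemma psd_of_re {M : Matrix ι ι ℂ} (hM : M.IsHermitian)
    (h : ∀ v : ι → ℂ, 0 ≤ (∑ i, ∑ j, starRingEnd ℂ (v i) * M i j * v j).re) : M.PosSemidef := by
  refine Matrix.PosSemidef.of_dotProduct_mulVec_nonneg hM fun v => ?_
  have him : (star v ⬝ᵥ (M *ᵥ v)).im = 0 := hM.im_star_dotProduct_mulVec_self v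
  have hre := h v
  rw [← quad_eq] at hre
  rw [Complex.le_def]
  exact ⟨hre, him.symm⟩

lemma smul_one_quad (a : ℂ) (v : ι → ℂ) :
    (∑ i, ∑ j, starRingEnd ℂ (v i) * (a • (1 : Matrix ι ι ℂ)) i j * v j) =
      a * ((∑ i, Complex.normSq (v i) : ℝ) : ℂ) := by
  simp only [Matrix.smul_apply, Matrix.one_apply, smul_eq_mul, mul_ite, mul_one, mul_zero, ite_mul,
    zero_mul, Finset.sum_ite_eq, Finset.mem_univ, if_true, Complex.ofReal_sum, Finset.mul_sum]
  refine Finset.sum_congr rfl fun i _ => ?_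
  rw [Complex.normSq_eq_conj_mul_self]; ring

lemma pinch {C : ℝ} (hC : 1 < C) {g : Matrix ι ι ℂ} (hg : g.IsHermitian)
    (hb : ∀ v : ι → ℂ, C⁻¹ * (∑ i, Complex.normSq (v i))
          ≤ (∑ i, ∑ j, starRingEnd ℂ (v i) * g i j * v j).re ∧
      (∑ i, ∑ j, starRingEnd ℂ (v i) * g i j * v j).re
          ≤ C * (∑ i, Complex.normSq (v i))) : Pinch C g g⁻¹ := by
  have hC0 : 0 < C := by linarith
  have hherm : ∀ a : ℝ, ((a : ℂ) • (1 : Matrix ι ι ℂ)).IsHermitian := fun a => by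
    simp [Matrix.IsHermitian, Matrix.conjTranspose_smul]
  have glo : (g - ((C⁻¹ : ℝ) : ℂ) • 1).PosSemidef := by
    refine psd_of_re (hg.sub (hherm _)) fun v => ?_
    simp only [Matrix.sub_apply, mul_sub, sub_mul, Finset.sum_sub_distrib]
    rw [smul_one_quad, Complex.sub_re, Complex.re_ofReal_mul, Complex.ofReal_re]
    linarith [(hb v).1]
  have ghi : ((C : ℂ) • 1 - g).PosSemidef := by
    refine psd_of_re ((hherm _).sub hg) fun v => ?_
    simp only [Matrix.sub_apply, mul_sub, sub_mul, Finset.sum_sub_distrib]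
    rw [smul_one_quad, Complex.sub_re, Complex.re_ofReal_mul, Complex.ofReal_re]
    linarith [(hb v).2]
  have hCi : (0 : ℂ) < ((C⁻¹ : ℝ) : ℂ) := by
    rw [Complex.zero_lt_real]; positivity
  have gpos : g.PosDef := by
    have h1 : (((C⁻¹ : ℝ) : ℂ) • (1 : Matrix ι ι ℂ)).PosDef := Matrix.PosDef.one.smul hCi
    have := Matrix.PosDef.posSemidef_add glo h1
    simpa using this
  have hpos := gpos.inv
  have hdet : IsUnit g.det := (Matrix.isUnit_iff_isUnit_det _).1 gpos.isUnit
  have gh : g * g⁻¹ = 1 := Matrix.mul_nonsing_inv _ hdet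
  have hg' : g⁻¹ * g = 1 := Matrix.nonsing_inv_mul _ hdet
  have hCC : (C : ℂ) * ((C⁻¹ : ℝ) : ℂ) = 1 := by
    rw [← Complex.ofReal_mul, mul_inv_cancel₀ hC0.ne']; simp
  set c : ℂ := ((C⁻¹ : ℝ) : ℂ) with hc
  set h := g⁻¹ with hh
  refine ⟨gpos, hpos, glo, ghi, ?_, ?_⟩
  · have k1 : (h - c • 1)ᴴ = h - c • 1 := (hpos.isHermitian.sub (hherm _))
    have e : h - c • 1 = (h - c • 1)ᴴ * g * (h - c • 1) + (c * c) • ((C : ℂ) • 1 - g) := by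
      rw [k1]
      have : (h - c • 1) * g * (h - c • 1) = h - (2 * c) • 1 + (c * c) • g := by
        simp only [Matrix.sub_mul, Matrix.mul_sub, hg', Matrix.one_mul, Matrix.smul_mul, Matrix.mul_smul,
          Matrix.mul_one, gh]
        module
      rw [this, smul_sub, smul_smul, mul_assoc, mul_comm c (C : ℂ), hCC, mul_one]
      module
    rw [e]
    exact (gpos.posSemidef.conjTranspose_mul_mul_same _).add
      (ghi.smul (mul_nonneg hCi.le hCi.le))
  · have k1 : ((C : ℂ) • 1 - h)ᴴ = (C : ℂ) • 1 - h := ((hherm _).sub hpos.isHermitian)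
    have k2 : hᴴ = h := hpos.isHermitian
    have e : (C : ℂ) • 1 - h = c • (((C : ℂ) • 1 - h)ᴴ * ((C : ℂ) • 1 - h)) +
        hᴴ * (g - c • 1) * h := by
      rw [k1, k2]
      simp only [Matrix.sub_mul, Matrix.mul_sub, hg', Matrix.one_mul, Matrix.smul_mul, Matrix.mul_smul,
          Matrix.mul_one, smul_sub, smul_smul]
      have h1 : c * ((C : ℂ) * C) = C := by rw [← mul_assoc, mul_comm c, hCC, one_mul]
      have h2 : c * (C : ℂ) = 1 := by rw [mul_comm, hCC]
      rw [h1, h2]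
      module
    rw [e]
    exact ((Matrix.posSemidef_conjTranspose_mul_self _).smul hCi.le).add
      (glo.conjTranspose_mul_mul_same _)

lemma Pinch.trace_le {C : ℝ} {P : Matrix ι ι ℂ} (hP : ((C : ℂ) • 1 - P).PosSemidef) :
    P.trace.re ≤ Fintype.card ι * C := by
  have h := (Complex.le_def.1 hP.trace_nonneg).1
  simp [Matrix.trace_sub, Matrix.trace_smul] at h
  linarith

/-- Upper comparison. -/
lemma Pinch.upper {C : ℝ} {g h : Matrix ι ι ℂ} (p : Pinch C g h) (X : ι → Matrix ι ι ℂ) :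
    (ipc h g h X X).re ≤ C * (ipc h g 1 X X).re := by
  have := ipc_pos p.hpos.posSemidef p.gpos.posSemidef p.hhi X
  rw [ipc_sub3, ipc_smul3, Complex.sub_re, Complex.re_ofReal_mul] at this
  linarith

lemma Pinch.zero {C : ℝ} (hC : 0 < C) {g h : Matrix ι ι ℂ} (p : Pinch C g h) (X : ι → Matrix ι ι ℂ)
    (h0 : (ipc h g h X X).re ≤ 0) (k : ι) : X k = 0 := by
  have one : (1 : Matrix ι ι ℂ).PosSemidef := Matrix.PosSemidef.one
  have h1 := ipc_pos p.hpos.posSemidef p.gpos.posSemidef p.hlo X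
  have h2 := ipc_pos p.hpos.posSemidef p.glo one X
  have h3 := ipc_pos p.hlo one one X
  rw [ipc_sub3, ipc_smul3, Complex.sub_re, Complex.re_ofReal_mul] at h1
  rw [ipc_sub2, ipc_smul2, Complex.sub_re, Complex.re_ofReal_mul] at h2
  rw [ipc_sub1, ipc_smul1, Complex.sub_re, Complex.re_ofReal_mul] at h3
  have hCi : 0 < C⁻¹ := by positivity
  have h4 : (ipc h g 1 X X).re ≤ 0 := by
    by_contra hh; push Not at hh; nlinarith [mul_pos hCi hh]
  have h5 : (ipc h 1 1 X X).re ≤ 0 := by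
    by_contra hh; push Not at hh; nlinarith [mul_pos hCi hh]
  have h6 : (ipc 1 1 1 X X).re ≤ 0 := by
    by_contra hh; push Not at hh; nlinarith [mul_pos hCi hh]
  have e : (ipc 1 1 1 X X) = ∑ k, Matrix.trace (X k * (X k)ᴴ) := by
    simp [ipc, Matrix.one_apply]
  rw [e, Complex.re_sum] at h6
  have hnn : ∀ k, 0 ≤ (Matrix.trace (X k * (X k)ᴴ)).re := fun k =>
    (Complex.le_def.1 (Matrix.posSemidef_self_mul_conjTranspose (X k)).trace_nonneg).1
  have h7 : (Matrix.trace (X k * (X k)ᴴ)).re = 0 :=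
    le_antisymm ((Finset.single_le_sum (fun k _ => hnn k) (Finset.mem_univ k)).trans h6) (hnn k)
  have h8 : Matrix.trace (X k * (X k)ᴴ) = 0 := by
    have := (Complex.le_def.1 (Matrix.posSemidef_self_mul_conjTranspose (X k)).trace_nonneg).2
    exact Complex.ext h7 this.symm
  exact Matrix.trace_mul_conjTranspose_self_eq_zero_iff.1 h8

end pos
end Calabi
namespace Calabi
namespace Data
section cut
variable {A : Type*} [CommRing A] [StarRing A] {ι : Type*} [Fintype ι] [DecidableEq ι]
variable (D : Data A ι)

lemma ip_add_right (X Y Y') : D.ip X (Y + Y') = D.ip X Y + D.ip X Y' := by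
  rw [← D.star_ip, ip_add_left, star_add, star_ip, star_ip]

lemma ip_smul_right (a : A) (X Y) : D.ip X (a • Y) = star a * D.ip X Y := by
  rw [← D.star_ip, ip_smul_left, star_mul', star_ip]

lemma dS (i : ι) : D.d i D.S = D.ip D.Γ (D.F i) + D.ip (D.Cv i) D.Γ := by
  have h : star D.S = D.S := D.star_ip _ _
  rw [← h, ← D.hdb, dbS, star_add, star_ip, star_ip]

lemma lap_add (a b : A) : D.lap (a + b) = D.lap a + D.lap b := by
  simp [lap, mul_add, Finset.sum_add_distrib]

lemma lap_sum {κ : Type*} (s : Finset κ) (f : κ → A) :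
    D.lap (∑ k ∈ s, f k) = ∑ k ∈ s, D.lap (f k) := by
  classical
  induction s using Finset.induction_on with
  | empty => simp [lap]
  | insert a s ha ih => rw [Finset.sum_insert ha, Finset.sum_insert ha, lap_add, ih]

lemma lap_cmul (c : A) (h1 : ∀ i, D.d i c = 0) (h2 : ∀ i, D.db i c = 0) (f : A) :
    D.lap (c * f) = c * D.lap f := by
  simp only [lap, Derivation.leibniz, h1, h2, smul_eq_mul, mul_zero, add_zero, Finset.mul_sum]
  refine Finset.sum_congr rfl fun k _ => Finset.sum_congr rfl fun l _ => ?_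
  ring

lemma lap_trg : D.lap (Matrix.trace D.g) =
    ∑ k, ∑ l, D.h l k * Matrix.trace (D.Γ k * D.g * (D.Γ l)ᴴ * 1) := by
  simp only [Matrix.trace, lap_sum, Matrix.diag_apply, lapg, Matrix.mul_one, Finset.mul_sum]
  rw [Finset.sum_comm]
  refine Finset.sum_congr rfl fun k _ => ?_
  rw [Finset.sum_comm]

lemma lap_cut (φ : A) (hφ : star φ = φ) : D.lap (φ * φ * D.S) =
    ∑ i, ∑ j, D.h i j * D.ip (φ • D.F i + (2 * D.db i φ) • D.Γ) (φ • D.F j + (2 * D.db j φ) • D.Γ)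
    + ∑ i, ∑ j, D.h j i * D.ip (φ • D.Cv i + (2 * D.d i φ) • D.Γ) (φ • D.Cv j + (2 * D.d j φ) • D.Γ)
    + D.S * (2 * φ * D.lap φ - 6 * ∑ i, ∑ j, D.h j i * (D.d i φ * D.db j φ)) := by
  have h2 : star (2 : A) = 2 := by
    have : (2 : A) = 1 + 1 := by norm_num
    rw [this, star_add, star_one]
  have e1 : D.lap (φ * φ * D.S) = φ * φ * D.lap D.S + ∑ i, ∑ j, D.h j i *
      (2 * φ * D.d i φ * D.db j D.S + 2 * φ * D.db j φ * D.d i D.S +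
       D.S * (2 * D.d i φ * D.db j φ + 2 * φ * D.d i (D.db j φ))) := by
    simp only [lap, Finset.mul_sum, ← Finset.sum_add_distrib]
    refine Finset.sum_congr rfl fun k _ => Finset.sum_congr rfl fun l _ => ?_
    simp only [Derivation.leibniz, smul_eq_mul, map_add]
    ring
  rw [e1, lapS]
  rw [Finset.sum_comm (f := fun i j => D.h i j * D.ip (φ • D.F i + (2 * D.db i φ) • D.Γ) (φ • D.F j + (2 * D.db j φ) • D.Γ))]
  simp only [lap, Finset.mul_sum, mul_sub, ← Finset.sum_add_distrib, ← Finset.sum_sub_distrib]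
  refine Finset.sum_congr rfl fun i _ => Finset.sum_congr rfl fun j _ => ?_
  simp only [ip_add_left, ip_add_right, ip_smul_left, ip_smul_right, star_mul', h2, hφ, D.hd, D.hdb,
    dbS, dS]
  rw [show D.ip D.Γ D.Γ = D.S from rfl]
  ring

end cut
end Data
end Calabi
namespace Calabi
section maxp
open scoped ComplexOrder
variable {N : ℕ}

lemma deriv_line (f : Sm N) (x v : Cn N) (s : ℝ) :
    HasDerivAt (fun s : ℝ => (ev (x + s • v) f).re) (ev (x + s • v) (dv v f)).re s := by
  have hline : HasDerivAt (fun s : ℝ => x + s • v) v s := by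
    simpa using ((hasDerivAt_id s).smul_const v).const_add x
  have h1 := (Sm_diff f (x + s • v)).hasFDerivAt.comp_hasDerivAt s hline
  exact Complex.reCLM.hasFDerivAt.comp_hasDerivAt s h1

lemma max_line (f : Sm N) (x v : Cn N) (hmax : IsLocalMax (fun y => (ev y f).re) x) :
    (ev x (dv v (dv v f))).re ≤ 0 := by
  by_contra hpos
  push Not at hpos
  set u : ℝ → ℝ := fun s => (ev (x + s • v) f).re with hu
  have hd : deriv u = fun s => (ev (x + s • v) (dv v f)).re := by
    ext s; exact (deriv_line f x v s).deriv
  have hdd : deriv (deriv u) = fun s => (ev (x + s • v) (dv v (dv v f))).re := by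
    rw [hd]; ext s; exact (deriv_line (dv v f) x v s).deriv
  have hcont : Continuous (fun s : ℝ => x + s • v) := by fun_prop
  have hm : IsLocalMax u 0 := by
    have : Filter.Tendsto (fun s : ℝ => x + s • v) (nhds 0) (nhds x) := by
      have := hcont.tendsto 0
      simpa using this
    have h2 := this.eventually hmax
    filter_upwards [h2] with s hs
    simpa [hu] using hs
  have hmin : IsLocalMin u 0 := by
    refine isLocalMin_of_deriv_deriv_pos ?_ hm.deriv_eq_zero ?_
    · rw [hdd]; simpa using hpos
    · exact (deriv_line f x v 0).continuousAt
  have hc : u =ᶠ[nhds 0] fun _ => u 0 := by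
    filter_upwards [hm, hmin] with s h1 h2
    exact le_antisymm h1 h2
  have h3 := hc.deriv.deriv_eq
  rw [hdd] at h3
  simp at h3
  linarith

lemma dz_dir (w : Fin N → ℂ) (f : Sm N) : ∑ i, cst (w i) * dz i f =
    cst 2⁻¹ * (dv (∑ i, w i • coordDir N i) f - cst Complex.I * dv (Complex.I • ∑ i, w i • coordDir N i) f) := by
  refine Sm.ext_ev fun x => ?_
  simp only [dz_def, map_sum, map_mul, map_sub]
  simp only [ev_apply, cst_apply, dv_apply]
  set L := fderiv ℝ (f : Cn N → ℂ) x
  have hI : ∀ v : Cn N, ∀ w : ℂ, L (w • v) = w.re * L v + w.im * L (Complex.I • v) := by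
    intro v w
    have : w • v = w.re • v + w.im • (Complex.I • v) := by
      conv_lhs => rw [← Complex.re_add_im w, add_smul, mul_smul]
      rfl
    rw [this, map_add, map_smul, map_smul]; simp
  rw [Finset.smul_sum, map_sum, map_sum, Finset.mul_sum, ← Finset.sum_sub_distrib, Finset.mul_sum]
  refine Finset.sum_congr rfl fun i _ => ?_
  rw [smul_smul, hI _ (w i), hI _ (Complex.I * w i)]
  simp
  have hw := Complex.re_add_im (w i)
  linear_combination (- (2 : ℂ)⁻¹ * (w i).im * L (Complex.I • coordDir N i)) * Complex.I_mul_I - (2 : ℂ)⁻¹ * (L (coordDir N i) - Complex.I * L (Complex.I • coordDir N i)) * hw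

lemma dzb_dir (w : Fin N → ℂ) (f : Sm N) : ∑ i, cst (star (w i)) * dzb i f =
    cst 2⁻¹ * (dv (∑ i, w i • coordDir N i) f + cst Complex.I * dv (Complex.I • ∑ i, w i • coordDir N i) f) := by
  have h := congrArg star (dz_dir w (star f))
  simp only [star_sum, star_mul', star_sub, star_cst, dz_star, dv_star, star_star] at h
  rw [h]
  have : (cst (star Complex.I) : Sm N) = - cst Complex.I := by
    ext x; simp [cst_apply]
  rw [this, show (star (2⁻¹ : ℂ)) = 2⁻¹ by simp]
  ring

lemma cst_mul (a b : ℂ) : (cst (a * b) : Sm N) = cst a * cst b := map_mul _ _ _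

lemma dz_cst (i : Fin N) (c : ℂ) : dz i (cst c) = 0 := by simp [dz_def, dv_cst]
lemma dzb_cst (i : Fin N) (c : ℂ) : dzb i (cst c) = 0 := by simp [dzb_def, dv_cst]

lemma hess_dir (w : Fin N → ℂ) (f : Sm N) :
    ∑ i, ∑ j, cst (w i) * cst (star (w j)) * dz i (dzb j f) =
    cst 4⁻¹ * (dv (∑ i, w i • coordDir N i) (dv (∑ i, w i • coordDir N i) f) +
      dv (Complex.I • ∑ i, w i • coordDir N i) (dv (Complex.I • ∑ i, w i • coordDir N i) f)) := by
  have h1 : ∑ i, ∑ j, cst (w i) * cst (star (w j)) * dz i (dzb j f) =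
      ∑ i, cst (w i) * dz i (∑ j, cst (star (w j)) * dzb j f) := by
    refine Finset.sum_congr rfl fun i _ => ?_
    rw [map_sum, Finset.mul_sum]
    refine Finset.sum_congr rfl fun j _ => ?_
    rw [Derivation.leibniz, dz_cst]; simp [mul_assoc]
  rw [h1, dz_dir, dzb_dir]
  set V := ∑ i, w i • coordDir N i
  simp only [Derivation.leibniz, map_add, dv_cst, smul_eq_mul, dv_comm (Complex.I • V) V]
  have hI : (cst Complex.I * cst Complex.I : Sm N) = -1 := by
    rw [← cst_mul, Complex.I_mul_I]; ext x; simp [cst_apply]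
  have h4 : (cst 4⁻¹ : Sm N) = cst 2⁻¹ * cst 2⁻¹ := by rw [← cst_mul]; norm_num
  rw [h4]
  linear_combination (-(cst 2⁻¹ * cst 2⁻¹ * dv (Complex.I • V) (dv (Complex.I • V) f))) * hI

lemma maxprin (f : Sm N) (x : Cn N) (hmax : IsLocalMax (fun y => (ev y f).re) x)
    {P : Matrix (Fin N) (Fin N) ℂ} (hP : P.PosSemidef) :
    (∑ i, ∑ j, P j i * ev x (dz i (dzb j f))).re ≤ 0 := by
  obtain ⟨m, v, rfl⟩ := Matrix.posSemidef_iff_eq_sum_vecMulVec.mp hP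
  have : ∑ i, ∑ j, (∑ p, Matrix.vecMulVec (v p) (star (v p))) j i * ev x (dz i (dzb j f)) =
      ∑ p, ev x (∑ i, ∑ j, cst (star (v p i)) * cst (star (star (v p j))) * dz i (dzb j f)) := by
    simp only [Matrix.sum_apply, Matrix.vecMulVec_apply, Finset.sum_mul, star_star, Pi.star_apply,
      map_sum, map_mul]
    conv_rhs => rw [Finset.sum_comm]
    refine Finset.sum_congr rfl fun k _ => ?_
    rw [Finset.sum_comm]
    refine Finset.sum_congr rfl fun p _ => Finset.sum_congr rfl fun l _ => ?_
    simp only [ev_apply, cst_apply]; ring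
  rw [this, Complex.re_sum]
  refine Finset.sum_nonpos fun p _ => ?_
  have h1 := hess_dir (fun i => star (v p i)) f
  rw [h1]
  have h2 := max_line f x (∑ i, star (v p i) • coordDir N i) hmax
  have h3 := max_line f x (Complex.I • ∑ i, star (v p i) • coordDir N i) hmax
  rw [map_mul, map_add, show ev x (cst 4⁻¹) = ((4⁻¹ : ℝ) : ℂ) by simp [ev_apply, cst_apply],
    Complex.re_ofReal_mul, Complex.add_re]
  linarith

end maxp
end Calabi
namespace Calabi
section build
open scoped ComplexOrder ContDiff
variable {N : ℕ}

def Gm (g : Cn N → Matrix (Fin N) (Fin N) ℂ) (hs : ∀ i j, ContDiff ℝ ∞ (fun x => g x i j)) :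
    Matrix (Fin N) (Fin N) (Sm N) := Matrix.of fun i j => ⟨fun x => g x i j, hs i j⟩

lemma Gm_ev (g : Cn N → Matrix (Fin N) (Fin N) ℂ) (hs : ∀ i j, ContDiff ℝ ∞ (fun x => g x i j))
    (x : Cn N) : (Gm g hs).map (ev x) = g x := rfl

lemma Gm_unit (g : Cn N → Matrix (Fin N) (Fin N) ℂ) (hs : ∀ i j, ContDiff ℝ ∞ (fun x => g x i j))
    (hpos : ∀ x, (g x).PosDef) : IsUnit (Gm g hs).det := by
  refine isUnit_of_ne _ fun x => ?_
  rw [RingHom.map_det]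
  exact (hpos x).det_pos.ne'

lemma Gm_inv (g : Cn N → Matrix (Fin N) (Fin N) ℂ) (hs : ∀ i j, ContDiff ℝ ∞ (fun x => g x i j))
    (hpos : ∀ x, (g x).PosDef) (x : Cn N) : ((Gm g hs)⁻¹).map (ev x) = (g x)⁻¹ := by
  symm
  refine Matrix.inv_eq_right_inv ?_
  have h := Matrix.mul_nonsing_inv _ (Gm_unit g hs hpos)
  have h2 := congrArg (fun M => M.map (ev x)) h
  simp only [Matrix.map_mul] at h2
  rw [Gm_ev] at h2
  rw [h2]
  exact Matrix.map_one _ (map_zero _) (map_one _)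

lemma Gm_ric (g : Cn N → Matrix (Fin N) (Fin N) ℂ) (hs : ∀ i j, ContDiff ℝ ∞ (fun x => g x i j))
    (hpos : ∀ x, (g x).PosDef) (hric : ∀ x, ricMat g x = 0) (i j : Fin N) :
    dz i (Matrix.trace ((Gm g hs)⁻¹ * (Gm g hs).map (dzb j))) = 0 := by
  have hsl : ∀ x, (g x).det ∈ Complex.slitPlane := fun x => by
    have := Complex.lt_def.1 (hpos x).det_pos
    left; simpa using this.1
  have e : (fun y => wdzbar j (fun w => Complex.log ((g w).det)) y) =
      ((Matrix.trace ((Gm g hs)⁻¹ * (Gm g hs).map (dzb j)) : Sm N) : Cn N → ℂ) := by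
    ext x
    rw [← ev_apply, wdzbar, fderiv_logdet hs hsl, fderiv_logdet hs hsl]
    have h1 : ev x (Matrix.trace ((Gm g hs)⁻¹ * (Gm g hs).map (dzb j))) =
        Matrix.trace ((g x)⁻¹ * ((Gm g hs).map (dzb j)).map (ev x)) := by
      rw [← Gm_inv g hs hpos x, ← Matrix.map_mul, Matrix.trace, map_sum]
      rfl
    have h2 : ((Gm g hs).map (dzb j)).map (ev x) = (2 : ℂ)⁻¹ •
        (Matrix.of (fun a b => fderiv ℝ (fun y => g y a b) x (coordDir N j)) +
        Complex.I • Matrix.of (fun a b => fderiv ℝ (fun y => g y a b) x (Complex.I • coordDir N j))) := by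
      ext a b; rfl
    rw [h1, h2]
    simp only [Matrix.mul_smul, Matrix.mul_add, Matrix.trace_smul, Matrix.trace_add, smul_eq_mul]
  ext x
  have h := congrFun (congrFun (hric x) i) j
  simp only [ricMat, Matrix.of_apply, e, Matrix.zero_apply, neg_eq_zero] at h
  exact h

def mkData (g : Cn N → Matrix (Fin N) (Fin N) ℂ) (hk : IsKahlerMatrixField g)
    (hpos : ∀ x, (g x).PosDef) (hric : ∀ x, ricMat g x = 0) : Data (Sm N) (Fin N) where
  d := dz
  db := dzb
  g := Gm g hk.1
  h := (Gm g hk.1)⁻¹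
  hd := dz_star
  dd := dz_comm
  ddb := dzb_dz
  gh := Matrix.mul_nonsing_inv _ (Gm_unit g hk.1 hpos)
  hg := Matrix.nonsing_inv_mul _ (Gm_unit g hk.1 hpos)
  gherm := by
    ext i j x
    exact congrFun (congrFun (hk.2.1 x) i) j
  hherm := by
    rw [Matrix.conjTranspose_nonsing_inv]
    congr 1
    ext i j x
    exact congrFun (congrFun (hk.2.1 x) i) j
  kah := fun i j k => by
    ext x
    exact hk.2.2 x i j k
  ric := fun i j => by
    have hG : (Gm g hk.1)ᴴ = Gm g hk.1 := by
      ext i j x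
      exact congrFun (congrFun (hk.2.1 x) i) j
    have h := congrArg star (Gm_ric g hk.1 hpos hric j i)
    rw [dz_star, star_zero, ← Matrix.trace_conjTranspose, Matrix.conjTranspose_mul,
      Matrix.conjTranspose_nonsing_inv, hG] at h
    have h2 : ((Gm g hk.1).map (dzb i))ᴴ = (Gm g hk.1).map (dz i) := by
      ext1 a b
      rw [Matrix.conjTranspose_apply, Matrix.map_apply, Matrix.map_apply]
      conv_rhs => rw [← hG, Matrix.conjTranspose_apply]
      rw [← star_star (dz i (star (Gm g hk.1 b a))), dz_star, star_star]
    rwa [h2] at h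

lemma ev_ip (g : Cn N → Matrix (Fin N) (Fin N) ℂ) (hk : IsKahlerMatrixField g)
    (hpos : ∀ x, (g x).PosDef) (hric : ∀ x, ricMat g x = 0) (x : Cn N) (P : Matrix (Fin N) (Fin N) (Sm N))
    (X Y : Fin N → Matrix (Fin N) (Fin N) (Sm N)) :
    ev x (∑ k, ∑ l, (mkData g hk hpos hric).h l k *
        Matrix.trace (X k * (mkData g hk hpos hric).g * (Y l)ᴴ * P)) =
      ipc (g x)⁻¹ (g x) (P.map (ev x)) (fun k => (X k).map (ev x)) (fun k => (Y k).map (ev x)) := by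
  have h1 : ∀ M : Matrix (Fin N) (Fin N) (Sm N), ev x M.trace = (M.map (ev x)).trace := fun M => by
    simp [Matrix.trace]
  have h2 : ∀ M : Matrix (Fin N) (Fin N) (Sm N), Mᴴ.map (ev x) = (M.map (ev x))ᴴ := fun M => by
    ext a b; rfl
  have h3 : ∀ l k, ev x ((mkData g hk hpos hric).h l k) = (g x)⁻¹ l k := fun l k => by
    rw [← Gm_inv g hk.1 hpos x]; rfl
  simp only [map_sum, map_mul, h1, h2, h3, ipc, Matrix.map_mul]
  rfl

end build
end Calabi
namespace Calabi
section cutoff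
open scoped ComplexOrder ContDiff
variable {N : ℕ}

def Wc (p : Cn N) (i : Fin N) : Sm N := ⟨fun x => x i - p i, by
  show ContDiff ℝ ∞ _
  have : ContDiff ℝ ∞ (fun x : Cn N => (EuclideanSpace.proj i : Cn N →L[ℂ] ℂ) x) :=
    ((EuclideanSpace.proj i : Cn N →L[ℂ] ℂ).restrictScalars ℝ).contDiff
  exact this.sub contDiff_const⟩

lemma ev_Wc (p x : Cn N) (i : Fin N) : ev x (Wc p i) = x i - p i := rfl

lemma dv_Wc (p : Cn N) (i : Fin N) (v : Cn N) : dv v (Wc p i) = cst (v i) := by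
  ext x
  rw [dv_apply, cst_apply]
  have h : HasFDerivAt (fun x : Cn N => x i - p i)
      ((EuclideanSpace.proj i : Cn N →L[ℂ] ℂ).restrictScalars ℝ) x :=
    (((EuclideanSpace.proj i : Cn N →L[ℂ] ℂ).restrictScalars ℝ).hasFDerivAt).sub_const _
  have h2 := h.fderiv
  show fderiv ℝ (fun x : Cn N => x i - p i) x v = v i
  rw [h2]; rfl

lemma dz_Wc (p : Cn N) (i j : Fin N) : dz i (Wc p j) = if i = j then 1 else 0 := by
  rw [dz_def, dv_Wc, dv_Wc]
  refine Sm.ext_ev fun x => ?_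
  simp only [map_mul, map_sub, apply_ite (ev x), map_one, map_zero]
  simp only [ev_apply, cst_apply, coordDir]
  by_cases h : i = j
  · subst h; simp; norm_num
  · simp [h, Ne.symm h]

lemma dzb_Wc (p : Cn N) (i j : Fin N) : dzb i (Wc p j) = 0 := by
  rw [dzb_def, dv_Wc, dv_Wc]
  refine Sm.ext_ev fun x => ?_
  simp only [map_mul, map_add, map_zero]
  simp only [ev_apply, cst_apply, coordDir]
  by_cases h : i = j
  · subst h; simp
  · simp [h, Ne.symm h]

lemma dz_sWc (p : Cn N) (i j : Fin N) : dz i (star (Wc p j)) = 0 := by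
  rw [← star_star (dz i (star (Wc p j))), dz_star, star_star, dzb_Wc, star_zero]

lemma dzb_sWc (p : Cn N) (i j : Fin N) : dzb i (star (Wc p j)) = if i = j then 1 else 0 := by
  rw [← dz_star, dz_Wc]; split <;> simp

def cut (p : Cn N) (r : ℝ) : Sm N := 1 - cst (r : ℂ) * ∑ i, Wc p i * star (Wc p i)

lemma star_cut (p : Cn N) (r : ℝ) : star (cut p r) = cut p r := by
  simp only [cut, star_sub, star_one, star_mul', star_cst, star_sum, star_star]
  congr 2
  · simp
  · exact Finset.sum_congr rfl fun i _ => mul_comm _ _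

lemma ev_cut (p : Cn N) (r : ℝ) (x : Cn N) : ev x (cut p r) = ((1 - r * ‖x - p‖ ^ 2 : ℝ) : ℂ) := by
  have h : ∀ i, (x i - p i) * star (x i - p i) = ((‖(x - p) i‖ ^ 2 : ℝ) : ℂ) := fun i => by
    rw [PiLp.sub_apply]
    simpa using Complex.mul_conj' (x i - p i)
  simp only [cut, map_sub, map_one, map_mul, map_sum, ev_star, ev_Wc, h]
  rw [EuclideanSpace.norm_sq_eq, ev_apply, cst_apply]
  push_cast; rfl

lemma dz_cut (p : Cn N) (r : ℝ) (i : Fin N) : dz i (cut p r) = - (cst (r : ℂ) * star (Wc p i)) := by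
  simp [cut, Derivation.leibniz, dz_cst, dz_Wc, dz_sWc]

lemma dzb_cut (p : Cn N) (r : ℝ) (i : Fin N) : dzb i (cut p r) = - (cst (r : ℂ) * Wc p i) := by
  simp [cut, Derivation.leibniz, dzb_cst, dzb_Wc, dzb_sWc]

lemma dzdzb_cut (p : Cn N) (r : ℝ) (i j : Fin N) :
    dz i (dzb j (cut p r)) = - (cst (r : ℂ) * if i = j then 1 else 0) := by
  simp [dzb_cut, Derivation.leibniz, dz_cst, dz_Wc]

end cutoff
end Calabi
namespace Calabi
section liou
open scoped ComplexOrder ContDiff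
variable {N : ℕ}

lemma quad_upper {C : ℝ} {h : Matrix (Fin N) (Fin N) ℂ} (hh : ((C : ℂ) • 1 - h).PosSemidef)
    (w : Fin N → ℂ) :
    (∑ i, ∑ j, h j i * (star (w i) * w j)).re ≤ C * ∑ i, Complex.normSq (w i) := by
  have h1 := (Complex.le_def.1 (hh.dotProduct_mulVec_nonneg (star w))).1
  rw [quad_eq] at h1
  simp only [Matrix.sub_apply, mul_sub, sub_mul, Finset.sum_sub_distrib] at h1
  rw [smul_one_quad, Complex.sub_re, Complex.re_ofReal_mul, Complex.ofReal_re] at h1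
  have e : ∑ i, ∑ j, h j i * (star (w i) * w j) =
      ∑ i, ∑ j, starRingEnd ℂ ((star w) i) * h i j * (star w) j := by
    rw [Finset.sum_comm]
    refine Finset.sum_congr rfl fun i _ => Finset.sum_congr rfl fun j _ => ?_
    simp; ring
  rw [e]
  simp at h1 ⊢
  linarith

lemma ev_S_eq (g : Cn N → Matrix (Fin N) (Fin N) ℂ) (hk : IsKahlerMatrixField g)
    (hpos : ∀ x, (g x).PosDef) (hric : ∀ x, ricMat g x = 0) (x : Cn N)
    (X Y : Fin N → Matrix (Fin N) (Fin N) (Sm N)) :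
    ev x ((mkData g hk hpos hric).ip X Y) =
      ipc (g x)⁻¹ (g x) (g x)⁻¹ (fun k => (X k).map (ev x)) (fun k => (Y k).map (ev x)) := by
  have := ev_ip g hk hpos hric x (mkData g hk hpos hric).h X Y
  rw [show ((mkData g hk hpos hric).h).map (ev x) = (g x)⁻¹ from Gm_inv g hk.1 hpos x] at this
  exact this

lemma ev_h (g : Cn N → Matrix (Fin N) (Fin N) ℂ) (hk : IsKahlerMatrixField g)
    (hpos : ∀ x, (g x).PosDef) (hric : ∀ x, ricMat g x = 0) (x : Cn N) (i j : Fin N) :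
    ev x ((mkData g hk hpos hric).h i j) = (g x)⁻¹ i j := by
  rw [← Gm_inv g hk.1 hpos x]; rfl

lemma lap_cutoff (g : Cn N → Matrix (Fin N) (Fin N) ℂ) (hk : IsKahlerMatrixField g)
    (hpos : ∀ x, (g x).PosDef) (hric : ∀ x, ricMat g x = 0) (x p : Cn N) (r : ℝ) :
    ev x ((mkData g hk hpos hric).lap (cut p r)) = ((-r : ℝ) : ℂ) * (g x)⁻¹.trace := by
  have : ∀ i j, (mkData g hk hpos hric).d i ((mkData g hk hpos hric).db j (cut p r)) =
    - (cst (r : ℂ) * if i = j then 1 else 0) := dzdzb_cut p r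
  simp only [Data.lap, this, map_sum, map_mul, ev_h, map_neg, apply_ite (ev x), map_one, map_zero]
  simp [ev_apply, cst_apply, Matrix.trace, Finset.mul_sum, mul_comm]

lemma max_step {C : ℝ} (hC : 1 < C)
    (g : Cn N → Matrix (Fin N) (Fin N) ℂ) (hk : IsKahlerMatrixField g)
    (hpos : ∀ x, (g x).PosDef) (hric : ∀ x, ricMat g x = 0) (hpin : ∀ x, Pinch C (g x) (g x)⁻¹)
    (p x : Cn N) (r : ℝ) (hr : 0 < r) (hx : r * ‖x - p‖ ^ 2 ≤ 1)
    (hmax : IsLocalMax (fun y => (ev y (cut p r * cut p r * (mkData g hk hpos hric).S +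
      cst ((r * (C * (2 * N * C + 6 * C) + 1) : ℝ) : ℂ) * Matrix.trace (mkData g hk hpos hric).g)).re) x) :
    (ev x (mkData g hk hpos hric).S).re ≤ 0 := by
  have hm := maxprin _ x hmax (hpin x).hpos.posSemidef
  set D := mkData g hk hpos hric with hD
  set ε : ℝ := r * (C * (2 * N * C + 6 * C) + 1) with hε
  have e1 : ∀ f, ∑ i, ∑ j, (g x)⁻¹ j i * ev x (dz i (dzb j f)) = ev x (D.lap f) := by
    intro f
    simp only [Data.lap, map_sum, map_mul, hD, ev_h]
    rfl
  rw [e1, D.lap_add, D.lap_cmul (cst (ε : ℂ)) (fun i => dz_cst i _) (fun i => dzb_cst i _),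
    D.lap_cut _ (star_cut p r), D.lap_trg] at hm
  simp only [map_add, map_mul, Complex.add_re] at hm
  have hP := (hpin x)
  have t1 : 0 ≤ (ev x (∑ i, ∑ j, D.h i j * D.ip (cut p r • D.F i + (2 * D.db i (cut p r)) • D.Γ) (cut p r • D.F j + (2 * D.db j (cut p r)) • D.Γ))).re := by
    simp only [map_sum, map_mul, hD, ev_h, ev_S_eq]
    exact ipc_pos2 (K := ((g x)⁻¹)ᵀ) hP.hpos.posSemidef hP.gpos.posSemidef hP.hpos.posSemidef
      hP.hpos.posSemidef.transpose _
  have t2 : 0 ≤ (ev x (∑ i, ∑ j, D.h j i * D.ip (cut p r • D.Cv i + (2 * D.d i (cut p r)) • D.Γ) (cut p r • D.Cv j + (2 * D.d j (cut p r)) • D.Γ))).re := by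
    simp only [map_sum, map_mul, hD, ev_h, ev_S_eq]
    exact ipc_pos2 (K := (g x)⁻¹) hP.hpos.posSemidef hP.gpos.posSemidef hP.hpos.posSemidef
      hP.hpos.posSemidef _
  have hS : ev x D.S = (((ev x D.S).re : ℝ) : ℂ) := by
    have : star (ev x D.S) = ev x D.S := by rw [← ev_star]; exact congrArg _ (D.star_ip _ _)
    exact (Complex.conj_eq_iff_re.1 this).symm
  have hSe : ev x D.S = _ := ev_S_eq g hk hpos hric x D.Γ D.Γ
  have hS0 : 0 ≤ (ev x D.S).re := by
    rw [hSe]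
    exact ipc_pos hP.hpos.posSemidef hP.gpos.posSemidef hP.hpos.posSemidef _
  have t4 := hP.upper (fun k => (D.Γ k).map (ev x))
  rw [← hSe] at t4
  have e4 := ev_ip g hk hpos hric x 1 D.Γ D.Γ
  rw [Matrix.map_one _ (map_zero _) (map_one _)] at e4
  rw [← hD] at e4
  rw [e4] at hm
  have e5 : ev x (cst (ε : ℂ)) = (ε : ℂ) := rfl
  rw [e5, Complex.re_ofReal_mul] at hm
  -- middle term
  have eB : ev x (∑ i, ∑ j, D.h j i * (D.d i (cut p r) * D.db j (cut p r))) =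
      ((r * r : ℝ) : ℂ) * ∑ i, ∑ j, (g x)⁻¹ j i * (star ((x - p) i) * (x - p) j) := by
    have h1 : ∀ i, D.d i (cut p r) = - (cst (r : ℂ) * star (Wc p i)) := dz_cut p r
    have h2 : ∀ i, D.db i (cut p r) = - (cst (r : ℂ) * Wc p i) := dzb_cut p r
    have h3 : ∀ i j, ev x (D.h i j) = (g x)⁻¹ i j := ev_h g hk hpos hric x
    simp only [h1, h2, h3, map_sum, map_mul, map_neg, ev_star, ev_Wc, Finset.mul_sum, PiLp.sub_apply]
    refine Finset.sum_congr rfl fun i _ => Finset.sum_congr rfl fun j _ => ?_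
    rw [ev_apply, cst_apply]; push_cast; ring
  have hB := quad_upper hP.hhi (fun i => (x - p) i)
  set B : ℂ := ∑ i, ∑ j, (g x)⁻¹ j i * (star ((x - p) i) * (x - p) j) with hBd
  have hn : ∑ i, Complex.normSq ((x - p) i) = ‖x - p‖ ^ 2 := by
    rw [EuclideanSpace.norm_sq_eq]
    exact Finset.sum_congr rfl fun i _ => by rw [Complex.normSq_eq_norm_sq]
  rw [hn] at hB
  have htr := Pinch.trace_le hP.hhi
  rw [Fintype.card_fin] at htr
  set s : ℝ := (ev x D.S).re with hs
  have e3 : (ev x D.S * ev x (2 * cut p r * D.lap (cut p r) - 6 * ∑ i, ∑ j, D.h j i * (D.d i (cut p r) * D.db j (cut p r)))).re =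
      s * (2 * (1 - r * ‖x - p‖ ^ 2) * (-r * ((g x)⁻¹.trace).re) - 6 * (r * r * B.re)) := by
    rw [map_sub, map_mul, map_mul, map_mul (ev x) 6, eB, lap_cutoff, ev_cut, hS, Complex.re_ofReal_mul]
    rw [map_ofNat, map_ofNat]
    congr 1
    rw [Complex.sub_re]
    congr 1
    · rw [show (2 : ℂ) = ((2 : ℝ) : ℂ) by norm_num, ← mul_assoc, ← Complex.ofReal_mul, ← Complex.ofReal_mul, Complex.re_ofReal_mul]
      ring
    · rw [show (6 : ℂ) = ((6 : ℝ) : ℂ) by norm_num, ← mul_assoc, ← Complex.ofReal_mul, Complex.re_ofReal_mul]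
      ring
  rw [e3] at hm
  set T := ((g x)⁻¹.trace).re
  set q := ‖x - p‖ ^ 2 with hq
  have hq0 : 0 ≤ q := by positivity
  set I := (ipc (g x)⁻¹ (g x) 1 (fun k => (D.Γ k).map (ev x)) (fun k => (D.Γ k).map (ev x))).re
  have hC0 : 0 < C := by linarith
  have hK : 0 ≤ C * (2 * N * C + 6 * C) + 1 := by positivity
  have b1 : (1 - r * q) * T ≤ N * C := by
    have h0 : 0 ≤ r * q := by positivity
    have : (1 - r * q) * T ≤ (1 - r * q) * (N * C) := mul_le_mul_of_nonneg_left htr (by linarith)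
    have : 0 ≤ (r * q) * (N * C) := by positivity
    linarith
  have b2 : r * B.re ≤ C := by
    have : r * B.re ≤ r * (C * q) := mul_le_mul_of_nonneg_left hB hr.le
    nlinarith
  have b3 : - (r * (2 * N * C + 6 * C)) ≤ 2 * (1 - r * q) * (-r * T) - 6 * (r * r * B.re) := by
    have h1 := mul_le_mul_of_nonneg_left b1 hr.le
    have h2 := mul_le_mul_of_nonneg_left b2 hr.le
    linarith
  have b4 := mul_le_mul_of_nonneg_left b3 hS0
  have b5 : ε * I ≤ s * (r * (2 * N * C + 6 * C)) := by linarith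
  have b6 : ε * s ≤ C * (s * (r * (2 * N * C + 6 * C))) := by
    have h1 : ε * s ≤ ε * (C * I) := mul_le_mul_of_nonneg_left t4 (by positivity)
    have h2 := mul_le_mul_of_nonneg_left b5 hC0.le
    linarith
  have b7 : r * s ≤ 0 := by rw [hε] at b6; linarith
  by_contra hcon
  push Not at hcon
  have := mul_pos hr hcon
  linarith

end liou
end Calabi
namespace Calabi
section liou2
open scoped ComplexOrder ContDiff
variable {N : ℕ}

lemma S_bound {C : ℝ} (hC : 1 < C)
    (g : Cn N → Matrix (Fin N) (Fin N) ℂ) (hk : IsKahlerMatrixField g)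
    (hpos : ∀ x, (g x).PosDef) (hric : ∀ x, ricMat g x = 0) (hpin : ∀ x, Pinch C (g x) (g x)⁻¹)
    (p : Cn N) (R : ℝ) (hR : 0 < R) :
    (ev p (mkData g hk hpos hric).S).re ≤
      (R ^ 2)⁻¹ * (C * (2 * N * C + 6 * C) + 1) * (N * C) := by
  set r : ℝ := (R ^ 2)⁻¹ with hr
  have hr0 : 0 < r := by positivity
  have hC0 : 0 < C := by linarith
  have hstep := max_step hC g hk hpos hric hpin p
  set D := mkData g hk hpos hric with hD
  set ε : ℝ := r * (C * (2 * N * C + 6 * C) + 1) with hε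
  have hε0 : 0 ≤ ε := by positivity
  set f : Sm N := cut p r * cut p r * D.S + cst (ε : ℂ) * Matrix.trace D.g with hf
  have hfx : ∀ x, (ev x f).re = (1 - r * ‖x - p‖ ^ 2) ^ 2 * (ev x D.S).re + ε * (g x).trace.re := by
    intro x
    have e5 : ev x (cst (ε : ℂ)) = (ε : ℂ) := rfl
    have e6 : ev x D.g.trace = (g x).trace := by
      rw [Matrix.trace, map_sum]; rfl
    rw [hf, map_add, map_mul, map_mul, map_mul, e5, e6, ev_cut, Complex.add_re, ← Complex.ofReal_mul,
      Complex.re_ofReal_mul, Complex.re_ofReal_mul]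
    ring
  have htr : ∀ x, (g x).trace.re ≤ N * C := fun x => by
    have := Pinch.trace_le (hpin x).ghi
    rwa [Fintype.card_fin] at this
  have htr0 : 0 ≤ (g p).trace.re := (Complex.le_def.1 (hpin p).gpos.posSemidef.trace_nonneg).1
  have hcont : Continuous fun x => (ev x f).re :=
    Complex.continuous_re.comp (Sm_cd f).continuous
  obtain ⟨x, hx, hmax⟩ := (isCompact_closedBall p R).exists_isMaxOn
    ⟨p, Metric.mem_closedBall_self hR.le⟩ hcont.continuousOn
  have hp : (ev p f).re ≤ (ev x f).re := hmax (Metric.mem_closedBall_self hR.le)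
  have hrR : r * R ^ 2 = 1 := inv_mul_cancel₀ (by positivity)
  have hle : (ev x f).re ≤ ε * (N * C) := by
    rw [hfx]
    have h1 : ε * (g x).trace.re ≤ ε * (N * C) := mul_le_mul_of_nonneg_left (htr x) hε0
    have h2 : (1 - r * ‖x - p‖ ^ 2) ^ 2 * (ev x D.S).re ≤ 0 := by
      rw [Metric.mem_closedBall, dist_eq_norm] at hx
      rcases hx.lt_or_eq with hlt | heq
      · have hloc : IsLocalMax (fun x => (ev x f).re) x :=
          hmax.isLocalMax (Metric.closedBall_mem_nhds_of_mem (by rwa [Metric.mem_ball, dist_eq_norm]))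
        have hx2 : r * ‖x - p‖ ^ 2 ≤ 1 := by
          rw [← hrR]; gcongr
        exact mul_nonpos_of_nonneg_of_nonpos (sq_nonneg _) (hstep x r hr0 hx2 hloc)
      · rw [heq, hrR]; simp
    linarith
  rw [hfx p] at hp
  simp only [sub_self, norm_zero] at hp
  have := mul_nonneg hε0 htr0
  norm_num at hp
  linarith

lemma S_zero {C : ℝ} (hC : 1 < C)
    (g : Cn N → Matrix (Fin N) (Fin N) ℂ) (hk : IsKahlerMatrixField g)
    (hpos : ∀ x, (g x).PosDef) (hric : ∀ x, ricMat g x = 0) (hpin : ∀ x, Pinch C (g x) (g x)⁻¹)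
    (p : Cn N) : (ev p (mkData g hk hpos hric).S).re ≤ 0 := by
  have h1 : Filter.Tendsto (fun R : ℝ => (R ^ 2)⁻¹ * ((C * (2 * N * C + 6 * C) + 1) * (N * C)))
      Filter.atTop (nhds (0 * ((C * (2 * N * C + 6 * C) + 1) * (N * C)))) :=
    (tendsto_inv_atTop_zero.comp (Filter.tendsto_pow_atTop two_ne_zero)).mul_const _
  rw [zero_mul] at h1
  refine ge_of_tendsto h1 ?_
  filter_upwards [Filter.eventually_gt_atTop 0] with R hR
  rw [← mul_assoc]
  exact S_bound hC g hk hpos hric hpin p R hR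

lemma static {C : ℝ} (hC : 1 < C)
    (g : Cn N → Matrix (Fin N) (Fin N) ℂ) (hk : IsKahlerMatrixField g)
    (hric : ∀ x, ricMat g x = 0) (hpin : ∀ x, Pinch C (g x) (g x)⁻¹)
    (x y : Cn N) : g x = g y := by
  have hpos : ∀ x, (g x).PosDef := fun x => (hpin x).gpos
  set D := mkData g hk hpos hric with hD
  have hΓ : ∀ k, D.Γ k = 0 := by
    intro k
    ext1 i j
    refine Sm.ext_ev fun z => ?_
    have h0 := S_zero hC g hk hpos hric hpin z
    rw [Data.S, ev_S_eq] at h0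
    have h1 := (hpin z).zero (by linarith) _ h0 k
    have h2 := congrFun (congrFun h1 i) j
    simpa using h2
  have hd : ∀ k i j, dz k (D.g i j) = 0 := by
    intro k i j
    have h1 := D.dg k
    rw [hΓ, Matrix.zero_mul] at h1
    exact congrFun (congrFun h1 i) j
  have hdb : ∀ k i j, dzb k (D.g i j) = 0 := by
    intro k i j
    rw [← D.star_g j i, ← dz_star, hd, star_zero]
  have hdir : ∀ v i j, dv v (D.g i j) = 0 := by
    intro v i j
    have e1 := dz_dir (fun k => v k) (D.g i j)
    have e2 := dzb_dir (fun k => v k) (D.g i j)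
    have hv : ∑ k, v k • coordDir N k = v := by
      have := (EuclideanSpace.basisFun (Fin N) ℂ).sum_repr v
      simpa [coordDir] using this
    simp only [hd, hdb, mul_zero, Finset.sum_const_zero, hv] at e1 e2
    refine Sm.ext_ev fun z => ?_
    have e3 := congrArg (ev z) e1
    have e4 := congrArg (ev z) e2
    simp only [map_mul, map_add, map_sub, map_zero] at e3 e4
    rw [show ev z (cst 2⁻¹) = 2⁻¹ from rfl] at e3 e4
    rw [map_zero]
    linear_combination (-1 : ℂ) * e3 - e4
  ext i j
  have hf : ∀ z, fderiv ℝ (fun w => g w i j) z = 0 := by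
    intro z
    ext v
    exact congrArg (ev z) (hdir v i j)
  exact is_const_of_fderiv_eq_zero (𝕜 := ℝ) ((hk.1 i j).differentiable (by simp)) hf x y

end liou2
end Calabi
namespace Calabi
section time
open scoped ComplexOrder

lemma const_Iic {f : ℝ → ℂ} (h : ∀ t ∈ Set.Iic (0 : ℝ), HasDerivAt f 0 t) {t : ℝ} (ht : t ≤ 0) :
    f 0 = f t :=
  constant_of_has_deriv_right_zero (a := t) (b := 0)
    (fun s hs => (h s hs.2).continuousAt.continuousWithinAt)
    (fun s hs => (h s hs.2.le).hasDerivWithinAt) 0 ⟨ht, le_rfl⟩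

lemma herm_zero {ι : Type*} [Fintype ι] [DecidableEq ι] {M : Matrix ι ι ℂ} (hM : M.IsHermitian)
    (h : ∀ v : ι → ℂ, (∑ i, ∑ j, starRingEnd ℂ (v i) * M i j * v j).re = 0) : M = 0 := by
  have h1 : M.PosSemidef := psd_of_re hM fun v => (h v).ge
  have h2 : (-M).PosSemidef := psd_of_re hM.neg fun v => by
    have := h v
    simp only [Matrix.neg_apply, mul_neg, neg_mul, Finset.sum_neg_distrib, Complex.neg_re, this]
    simp
  have h3 := h1.trace_nonneg
  have h4 := h2.trace_nonneg
  rw [Matrix.trace_neg, neg_nonneg] at h4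
  exact h1.trace_eq_zero_iff.1 (le_antisymm h4 h3)

lemma Pinch.unit {ι : Type*} [Fintype ι] [DecidableEq ι] {C : ℝ} {g h : Matrix ι ι ℂ}
    (p : Pinch C g h) : IsUnit g.det := (Matrix.isUnit_iff_isUnit_det _).1 p.gpos.isUnit

end time
end Calabi

/-- **Combined Liouville theorem for scalar-flat ancient Kähler–Ricci flows on `ℂ^{m+n}`.**
Suppose `ω∞(t)`, `t ∈ (-∞,0]`, is an ancient solution of the Kähler–Ricci flow
`∂_t ω = -Ric(ω)` on `ℂ^{m+n}` (standard complex structure, `ω` given by its coefficient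
matrix `g(t)`), with identically vanishing scalar curvature `R = tr(g⁻¹ Ric) ≡ 0` and with
`C⁻¹ ω_{ℂ^{m+n}} ≤ ω∞(t) ≤ C ω_{ℂ^{m+n}}` for some `C > 1` and all `t ≤ 0`.  Then `ω∞(t)`
is a constant-coefficient Kähler form, independent of both the space point and of `t`. -/
theorem liouville_ancient_scalar_flat_KRF
    (m n : ℕ)
    (g : ℝ → Cn (m + n) → Matrix (Fin (m + n)) (Fin (m + n)) ℂ)
    (hkahler : ∀ t ∈ Set.Iic (0 : ℝ), IsKahlerMatrixField (g t))
    -- the Kähler–Ricci flow `∂_t g_{i j̄} = -Ric_{i j̄}`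
    (hflow : ∀ t ∈ Set.Iic (0 : ℝ), ∀ (x : Cn (m + n)) (i j : Fin (m + n)),
      HasDerivAt (fun s => g s x i j) (-(ricMat (g t) x i j)) t)
    -- identically vanishing scalar curvature
    (hscalflat : ∀ t ∈ Set.Iic (0 : ℝ), ∀ x : Cn (m + n),
      Matrix.trace ((g t x)⁻¹ * ricMat (g t) x) = 0)
    -- uniform equivalence with the Euclidean Kähler form
    (C : ℝ) (hC : 1 < C)
    (hbound : ∀ t ∈ Set.Iic (0 : ℝ), ∀ (x : Cn (m + n)) (v : Fin (m + n) → ℂ),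
      C⁻¹ * (∑ i, Complex.normSq (v i))
          ≤ (∑ i, ∑ j, starRingEnd ℂ (v i) * g t x i j * v j).re ∧
      (∑ i, ∑ j, starRingEnd ℂ (v i) * g t x i j * v j).re
          ≤ C * (∑ i, Complex.normSq (v i))) :
    ∀ s ∈ Set.Iic (0 : ℝ), ∀ t ∈ Set.Iic (0 : ℝ), ∀ x y : Cn (m + n),
      g s x = g t y := by
  have hpin : ∀ t ∈ Set.Iic (0 : ℝ), ∀ x, Calabi.Pinch C (g t x) (g t x)⁻¹ := fun t ht x =>
    Calabi.pinch hC ((hkahler t ht).2.1 x) (hbound t ht x)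
  have hdet : ∀ t ∈ Set.Iic (0 : ℝ), ∀ x, (g t x).det = (g 0 x).det := by
    intro t ht x
    symm
    refine Calabi.const_Iic (f := fun s => (g s x).det) (fun s hs => ?_) ht
    have h1 := Calabi.jacobi (M := fun s => g s x) (M' := -(ricMat (g s) x)) (t := s)
      (fun i j => hflow s hs x i j)
    have hne : IsUnit (g s x).det :=
      (hpin s hs x).unit
    have h2 : (g s x).adjugate = (g s x).det • (g s x)⁻¹ := by
      rw [Matrix.inv_def, smul_smul, Ring.mul_inverse_cancel _ hne, one_smul]
    have h3 : Matrix.trace ((g s x).adjugate * -(ricMat (g s) x)) = 0 := by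
      rw [h2, Matrix.smul_mul, Matrix.trace_smul, Matrix.mul_neg, Matrix.trace_neg,
        hscalflat s hs x]
      simp
    rw [h3] at h1
    exact h1
  have hric : ∀ t ∈ Set.Iic (0 : ℝ), ∀ x, ricMat (g t) x = ricMat (g 0) x := by
    intro t ht x
    have : (fun w => Complex.log ((g t w).det)) = fun w => Complex.log ((g 0 w).det) := by
      funext w; rw [hdet t ht w]
    simp only [ricMat, this]
  have hlin : ∀ t ∈ Set.Iic (0 : ℝ), ∀ x, g t x = g 0 x - (t : ℂ) • ricMat (g 0) x := by
    intro t ht x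
    ext i j
    have h := Calabi.const_Iic (f := fun s => g s x i j + (s : ℂ) * ricMat (g 0) x i j)
      (fun s hs => by
        have h1 := (hflow s hs x i j).fun_add
          (((hasDerivAt_id s).ofReal_comp).mul_const (ricMat (g 0) x i j))
        rw [hric s hs x] at h1
        simpa using h1) ht
    simp only [Complex.ofReal_zero, zero_mul, add_zero] at h
    simp only [Matrix.sub_apply, Matrix.smul_apply, smul_eq_mul]
    rw [h]; ring
  have h0 : (0 : ℝ) ∈ Set.Iic (0 : ℝ) := Set.mem_Iic.2 le_rfl
  have hflat : ∀ x, ricMat (g 0) x = 0 := by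
    intro x
    have hm1 : (-1 : ℝ) ∈ Set.Iic (0 : ℝ) := Set.mem_Iic.2 (by norm_num)
    refine Calabi.herm_zero ?_ fun v => ?_
    · have h1 := hlin (-1) hm1 x
      have h2 : ricMat (g 0) x = g (-1) x - g 0 x := by rw [h1]; simp
      rw [h2]
      exact ((hkahler _ hm1).2.1 x).sub ((hkahler 0 h0).2.1 x)
    · set q := (∑ i, ∑ j, starRingEnd ℂ (v i) * ricMat (g 0) x i j * v j).re with hq
      set a := (∑ i, ∑ j, starRingEnd ℂ (v i) * g 0 x i j * v j).re with ha
      set b := ∑ i, Complex.normSq (v i) with hb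
      have hb0 : 0 ≤ b := Finset.sum_nonneg fun i _ => Complex.normSq_nonneg _
      have hC0 : 0 < C := by linarith
      have key : ∀ k : ℝ, 0 ≤ k → 0 ≤ a + k * q ∧ a + k * q ≤ C * b := by
        intro k hk
        have hkm : -k ∈ Set.Iic (0 : ℝ) := Set.mem_Iic.2 (by linarith)
        have h1 := hbound (-k) hkm x v
        have h2 : (∑ i, ∑ j, starRingEnd ℂ (v i) * g (-k) x i j * v j).re = a + k * q := by
          rw [hlin _ hkm x, ha, hq, ← Complex.re_ofReal_mul, ← Complex.add_re]
          congr 1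
          simp only [Finset.mul_sum, ← Finset.sum_add_distrib]
          refine Finset.sum_congr rfl fun i _ => Finset.sum_congr rfl fun j _ => ?_
          simp only [Matrix.sub_apply, Matrix.smul_apply, smul_eq_mul]
          push_cast; ring
        rw [h2] at h1
        exact ⟨le_trans (by positivity) h1.1, h1.2⟩
      have ha0 := key 0 le_rfl
      simp only [zero_mul, add_zero] at ha0
      by_contra hne
      have hq2 : 0 < |q| := abs_pos.2 hne
      have h3 := key ((C * b + 1) / |q|) (by positivity)
      rcases lt_or_gt_of_ne hne with hneg | hpos
      · have h4 : (C * b + 1) / |q| * q = -(C * b + 1) := by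
          rw [abs_of_neg hneg]; field_simp
        rw [h4] at h3; linarith [h3.1]
      · have h4 : (C * b + 1) / |q| * q = C * b + 1 := by
          rw [abs_of_pos hpos]; field_simp
        rw [h4] at h3; linarith [h3.2]
  have hstat : ∀ t ∈ Set.Iic (0 : ℝ), ∀ x, g t x = g 0 x := by
    intro t ht x
    rw [hlin t ht x, hflat x]; simp
  intro s hs t ht x y
  rw [hstat s hs x, hstat t ht y]
  exact Calabi.static hC (g 0) (hkahler 0 h0) hflat (hpin 0 h0) x y
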